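/- Let g : ℕ → ℂ satisfy Σ_{n≥0} g(n)q^n = (∏_{k≥0}(1 − q^{10k+2})(1 − q^{10k+8})) · (∏_{k≥0}(1 − q^{10k+4})(1 − q^{10k+6}))² · (∏_{k≥0}(1 − q^{5k+2})(1 − q^{5k+3}))^{−2} for all complex q with |q| < 1. Then g(n) is real for all n, and there exists N₀ such that for all n ≥ N₀: g(n) > 0 whenever n ≡ 0, 2 or 3 (mod 5), and g(n) < 0 whenever n ≡ 4 (mod 5). -/

import Mathlib

open Complex

/-!
Write `[x; p] = (x, p/x; p)_∞` and `Aᵢ = [q⁵ⁱ; q⁵⁰]`. Since `[x²; p²] = [x; p] [-x; p]`, the product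
equals `[q²; q¹⁰] [-q²; q⁵]²`. Jacobi's triple product and Schröter's formula split it according to
the exponent modulo `5`, and Weierstrass' three-term relation collapses each class to a single
quotient (the class `1` vanishes):
`1/(A₁² A₂ A₄²) + q²/(A₂³ A₃²) + 2q³/(A₁ A₂ A₃ A₄²) - q⁴/(A₂² A₃² A₄)`.
In the variable `Q = q⁵`, the series `1/Aᵢ` has nonnegative coefficients, positive at the multiples
of `i`. Hence each of the four quotients has positive coefficients, except possibly at `Q¹` where
`A₁` does not occur.
-/

namespace Tang

open Filter Finset Topology

section Pochhammer

/-- The finite `q`-Pochhammer symbol `(a; q)_n = ∏_{k < n} (1 - a qᵏ)`. -/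
def qPoch {R : Type*} [CommRing R] (a q : R) (n : ℕ) : R :=
  ∏ k ∈ range n, (1 - a * q ^ k)

/-- The infinite `q`-Pochhammer symbol `(a; q)_∞ = ∏_{k ≥ 0} (1 - a qᵏ)`, meant for `‖q‖ < 1`. -/
noncomputable def qPochInf {𝕜 : Type*} [NormedField 𝕜] (a q : 𝕜) : 𝕜 :=
  ∏' k : ℕ, (1 - a * q ^ k)

lemma qPoch_succ {R : Type*} [CommRing R] (a q : R) (n : ℕ) :
    qPoch a q (n + 1) = qPoch a q n * (1 - a * q ^ n) :=
  prod_range_succ _ n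

lemma qPoch_succ' {R : Type*} [CommRing R] (a q : R) (n : ℕ) :
    qPoch a q (n + 1) = (1 - a) * qPoch (a * q) q n := by
  simp only [qPoch, prod_range_succ', pow_zero, mul_one, pow_succ']
  rw [mul_comm]
  simp only [mul_assoc]

lemma qPoch_mul {R : Type*} [CommRing R] (a q : R) {r : ℕ} (n : ℕ) :
    qPoch a q (r * n) = ∏ i ∈ range r, qPoch (a * q ^ i) (q ^ r) n := by
  induction n with
  | zero => simp [qPoch]
  | succ n ih =>
    rw [Nat.mul_succ, qPoch, prod_range_add, ← qPoch, ih, ← prod_mul_distrib]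
    refine prod_congr rfl fun i _ => ?_
    rw [qPoch_succ, pow_add, pow_mul]
    ring

variable {𝕜 : Type*} [NormedField 𝕜] {a q : 𝕜}

lemma norm_pow_lt_one (hq : ‖q‖ < 1) {n : ℕ} (hn : n ≠ 0) : ‖q ^ n‖ < 1 := by
  simpa only [norm_pow] using pow_lt_one₀ (norm_nonneg q) hq hn

lemma mul_pow_ne_one (ha : ‖a‖ < 1) (hq : ‖q‖ < 1) (k : ℕ) : a * q ^ k ≠ 1 := by
  intro h
  have : ‖a‖ * ‖q‖ ^ k < 1 :=
    mul_lt_one_of_nonneg_of_lt_one_left (norm_nonneg a) ha (pow_le_one₀ (norm_nonneg q) hq.le)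
  rw [← norm_pow, ← norm_mul, h, norm_one] at this
  exact this.false

lemma qPoch_ne_zero (ha : ‖a‖ < 1) (hq : ‖q‖ < 1) (n : ℕ) : qPoch a q n ≠ 0 :=
  prod_ne_zero_iff.2 fun k _ => sub_ne_zero.2 (mul_pow_ne_one ha hq k).symm

lemma summable_norm_neg_mul_pow (a : 𝕜) (hq : ‖q‖ < 1) :
    Summable fun k : ℕ => ‖-(a * q ^ k)‖ := by
  simpa only [norm_neg, norm_mul, norm_pow] using
    (summable_geometric_of_lt_one (norm_nonneg q) hq).mul_left ‖a‖

variable [CompleteSpace 𝕜]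

lemma multipliable_one_sub_mul_pow (a : 𝕜) (hq : ‖q‖ < 1) :
    Multipliable fun k : ℕ => 1 - a * q ^ k := by
  simpa only [sub_eq_add_neg] using
    multipliable_one_add_of_summable (summable_norm_neg_mul_pow a hq)

lemma tendsto_qPoch (a : 𝕜) (hq : ‖q‖ < 1) :
    Tendsto (qPoch a q) atTop (𝓝 (qPochInf a q)) :=
  (multipliable_one_sub_mul_pow a hq).tendsto_prod_tprod_nat

lemma qPochInf_ne_zero (ha : ‖a‖ < 1) (hq : ‖q‖ < 1) : qPochInf a q ≠ 0 := by
  simp only [qPochInf, sub_eq_add_neg]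
  refine tprod_one_add_ne_zero_of_summable (fun k => ?_) (summable_norm_neg_mul_pow a hq)
  rw [← sub_eq_add_neg]
  exact sub_ne_zero.2 (mul_pow_ne_one ha hq k).symm

lemma qPochInf_eq_one_sub_mul (a : 𝕜) (hq : ‖q‖ < 1) :
    qPochInf a q = (1 - a) * qPochInf (a * q) q := by
  refine tendsto_nhds_unique ((tendsto_add_atTop_iff_nat 1).2 (tendsto_qPoch a hq)) ?_
  simpa only [qPoch_succ'] using (tendsto_qPoch (a * q) hq).const_mul (1 - a)

lemma qPochInf_eq_prod (a : 𝕜) (hq : ‖q‖ < 1) {r : ℕ} (hr : r ≠ 0) :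
    qPochInf a q = ∏ i ∈ range r, qPochInf (a * q ^ i) (q ^ r) := by
  have hqr : ‖q ^ r‖ < 1 := norm_pow_lt_one hq hr
  refine tendsto_nhds_unique
    ((tendsto_qPoch a hq).comp (tendsto_id.const_mul_atTop' hr.bot_lt)) ?_
  simpa only [Function.comp_def, id, qPoch_mul] using
    tendsto_finsetProd (range r) fun i _ => tendsto_qPoch (a * q ^ i) hqr

lemma qPochInf_mul_qPochInf_neg (a : 𝕜) (hq : ‖q‖ < 1) :
    qPochInf a q * qPochInf (-a) q = qPochInf (a ^ 2) (q ^ 2) := by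
  rw [qPochInf, qPochInf, ← (multipliable_one_sub_mul_pow a hq).tprod_mul
    (multipliable_one_sub_mul_pow (-a) hq)]
  exact tprod_congr fun k => by ring

/-- Euler's identity between partitions into odd parts and partitions into distinct parts. -/
lemma qPochInf_sq_mul_qPochInf_neg (hq : ‖q‖ < 1) :
    qPochInf q (q ^ 2) * qPochInf (-q) q = 1 := by
  have hq2 : ‖q ^ 2‖ < 1 := norm_pow_lt_one hq two_ne_zero
  have hdouble := qPochInf_mul_qPochInf_neg q hq
  rw [qPochInf_eq_prod q hq two_ne_zero] at hdouble
  simp only [prod_range_succ, prod_range_zero, one_mul, pow_zero, mul_one, pow_one, ← sq]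
    at hdouble
  exact mul_right_cancel₀ (qPochInf_ne_zero hq2 hq2) (by linear_combination hdouble)

end Pochhammer

section ModifiedTheta

/-- The modified theta function `[x; p] = (x; p)_∞ (p / x; p)_∞`. -/
noncomputable def modTheta {𝕜 : Type*} [NormedField 𝕜] (x p : 𝕜) : 𝕜 :=
  qPochInf x p * qPochInf (p / x) p

variable {𝕜 : Type*} [NormedField 𝕜] {x p : 𝕜}

lemma modTheta_div (hp : p ≠ 0) (x : 𝕜) : modTheta (p / x) p = modTheta x p := by
  rw [modTheta, modTheta, div_div_cancel₀ hp, mul_comm]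

lemma modTheta_pow_pow (q : 𝕜) (i : ℕ) {j : ℕ} (hj : j ≠ 0) :
    modTheta (q ^ i) (q ^ (i + j)) =
      qPochInf (q ^ i) (q ^ (i + j)) * qPochInf (q ^ j) (q ^ (i + j)) := by
  rcases eq_or_ne q 0 with rfl | hq
  · simp [modTheta, hj]
  · rw [modTheta, pow_add, mul_div_cancel_left₀ _ (pow_ne_zero i hq)]

variable [CompleteSpace 𝕜]

lemma modTheta_pow_pow_ne_zero {q : 𝕜} (hq : ‖q‖ < 1) {i j : ℕ} (hi : i ≠ 0) (hj : j ≠ 0) :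
    modTheta (q ^ i) (q ^ (i + j)) ≠ 0 := by
  have hij : ‖q ^ (i + j)‖ < 1 := norm_pow_lt_one hq (by omega)
  rw [modTheta_pow_pow q i hj]
  exact mul_ne_zero (qPochInf_ne_zero (norm_pow_lt_one hq hi) hij)
    (qPochInf_ne_zero (norm_pow_lt_one hq hj) hij)

lemma modTheta_one (hp : ‖p‖ < 1) : modTheta 1 p = 0 := by
  rw [modTheta, qPochInf_eq_one_sub_mul 1 hp, sub_self, zero_mul, zero_mul]

lemma mul_modTheta_mul_self (hp0 : p ≠ 0) (hp : ‖p‖ < 1) (hx : x ≠ 0) :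
    x * modTheta (x * p) p = -modTheta x p := by
  have hpx : p / (x * p) = x⁻¹ := by field_simp
  rw [modTheta, modTheta, qPochInf_eq_one_sub_mul x hp, hpx, qPochInf_eq_one_sub_mul x⁻¹ hp,
    inv_mul_eq_div]
  linear_combination
    (-(qPochInf (x * p) p * qPochInf (p / x) p)) * mul_inv_cancel₀ hx

lemma modTheta_mul_modTheta_neg (x : 𝕜) (hp : ‖p‖ < 1) :
    modTheta x p * modTheta (-x) p = modTheta (x ^ 2) (p ^ 2) := by
  rw [modTheta, modTheta, modTheta, ← div_pow, ← qPochInf_mul_qPochInf_neg _ hp,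
    ← qPochInf_mul_qPochInf_neg _ hp, div_neg]
  ring

lemma modTheta_eq_prod (x : 𝕜) (hp : ‖p‖ < 1) (hp0 : p ≠ 0) {r : ℕ} (hr : r ≠ 0) :
    modTheta x p = ∏ i ∈ range r, modTheta (x * p ^ i) (p ^ r) := by
  simp only [modTheta, prod_mul_distrib]
  rw [qPochInf_eq_prod x hp hr, qPochInf_eq_prod (p / x) hp hr,
    ← prod_range_reflect (fun i => qPochInf (p / x * p ^ i) (p ^ r))]
  congr 1
  refine prod_congr rfl fun i hi => ?_
  obtain ⟨d, rfl⟩ : ∃ d, r = i + d + 1 := ⟨r - i - 1, by have := mem_range.1 hi; omega⟩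
  congr 1
  rw [show i + d + 1 - 1 - i = d by omega, show i + d + 1 = d + 1 + i by ring, pow_add p (d + 1),
    mul_div_mul_right _ _ (pow_ne_zero i hp0), div_mul_eq_mul_div, pow_succ']

lemma modTheta_mul_modTheta_neg_mul_modTheta_neg_one (hp0 : p ≠ 0) (hp : ‖p‖ < 1) :
    modTheta p (p ^ 2) * modTheta (-p) (p ^ 2) * modTheta (-1) (p ^ 2) = 2 := by
  have hp2 : ‖p ^ 2‖ < 1 := norm_pow_lt_one hp two_ne_zero
  have heuler := qPochInf_sq_mul_qPochInf_neg hp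
  rw [qPochInf_eq_prod (-p) hp two_ne_zero] at heuler
  simp only [prod_range_succ, prod_range_zero, one_mul, pow_zero, mul_one, pow_one, neg_mul,
    ← sq] at heuler
  have hneg_one := qPochInf_eq_one_sub_mul (-1) hp2
  rw [neg_one_mul] at hneg_one
  have hself : p ^ 2 / p = p := by rw [sq, mul_div_cancel_right₀ p hp0]
  simp only [modTheta, div_neg, div_one, hself, hneg_one]
  calc _ = 2 * (qPochInf p (p ^ 2) * (qPochInf (-p) (p ^ 2) * qPochInf (-p ^ 2) (p ^ 2))) ^ 2 := by
        ring
    _ = 2 := by rw [heuler, one_pow, mul_one]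

end ModifiedTheta

section GaussianBinomial

/-- The Gaussian binomial coefficient `[M choose j]_p`, through the `q`-Pascal rule that peels off
the first factor of `∏_{k < M} (1 + y pᵏ)`. -/
def gaussBinom {R : Type*} [CommSemiring R] (p : R) : ℕ → ℕ → R
  | _, 0 => 1
  | 0, _ + 1 => 0
  | M + 1, j + 1 => p ^ (j + 1) * gaussBinom p M (j + 1) + gaussBinom p M j

@[simp] lemma gaussBinom_zero_right {R : Type*} [CommSemiring R] (p : R) (M : ℕ) :
    gaussBinom p M 0 = 1 := by
  cases M <;> rfl

lemma gaussBinom_succ_succ {R : Type*} [CommSemiring R] (p : R) (M j : ℕ) :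
    gaussBinom p (M + 1) (j + 1) = p ^ (j + 1) * gaussBinom p M (j + 1) + gaussBinom p M j :=
  rfl

lemma gaussBinom_eq_zero_of_lt {R : Type*} [CommSemiring R] (p : R) :
    ∀ {M j : ℕ}, M < j → gaussBinom p M j = 0
  | 0, _ + 1, _ => rfl
  | M + 1, j + 1, h => by
    rw [gaussBinom_succ_succ, gaussBinom_eq_zero_of_lt p (by omega),
      gaussBinom_eq_zero_of_lt p (by omega), mul_zero, add_zero]

@[simp] lemma gaussBinom_self {R : Type*} [CommSemiring R] (p : R) :
    ∀ M : ℕ, gaussBinom p M M = 1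
  | 0 => rfl
  | M + 1 => by
    rw [gaussBinom_succ_succ, gaussBinom_eq_zero_of_lt p M.lt_succ_self, gaussBinom_self p M,
      mul_zero, zero_add]

lemma gaussBinom_mul_qPoch {R : Type*} [CommRing R] (p : R) :
    ∀ j d : ℕ, gaussBinom p (j + d) j * (qPoch p p j * qPoch p p d) = qPoch p p (j + d)
  | 0, d => by simp [qPoch]
  | j + 1, 0 => by simp [qPoch]
  | j + 1, d + 1 => by
    have hleft := gaussBinom_mul_qPoch p (j + 1) d
    have hright := gaussBinom_mul_qPoch p j (d + 1)
    rw [show j + (d + 1) = j + 1 + d by ring] at hright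
    rw [← add_assoc, gaussBinom_succ_succ, qPoch_succ p p (j + 1 + d)]
    rw [qPoch_succ p p j] at hleft ⊢
    rw [qPoch_succ p p d] at hright ⊢
    linear_combination (p ^ (j + 1) * (1 - p * p ^ d)) * hleft + (1 - p * p ^ j) * hright

/-- The finite `q`-binomial theorem. -/
lemma qPoch_neg_eq_sum {R : Type*} [CommRing R] (p y : R) (M : ℕ) :
    qPoch (-y) p M = ∑ j ∈ range (M + 1), gaussBinom p M j * p ^ j.choose 2 * y ^ j := by
  induction M generalizing y with
  | zero => simp [qPoch]
  | succ M ih =>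
    have hterm : ∀ j ∈ range (M + 1),
        gaussBinom p (M + 1) (j + 1) * p ^ (j + 1).choose 2 * y ^ (j + 1) =
          gaussBinom p M (j + 1) * p ^ (j + 1).choose 2 * (y * p) ^ (j + 1) +
            y * (gaussBinom p M j * p ^ j.choose 2 * (y * p) ^ j) := fun j _ => by
      rw [gaussBinom_succ_succ, Nat.choose_succ_succ', Nat.choose_one_right]
      ring
    rw [qPoch_succ', neg_mul, ih, sum_range_succ' _ (M + 1), sum_congr rfl hterm,
      sum_add_distrib, ← mul_sum, sum_range_succ (fun j => gaussBinom p M (j + 1) * _ * _) M,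
      gaussBinom_eq_zero_of_lt p M.lt_succ_self]
    have hpeel := sum_range_succ' (fun j => gaussBinom p M j * p ^ j.choose 2 * (y * p) ^ j) M
    simp only [gaussBinom_zero_right, Nat.choose_zero_succ, pow_zero, mul_one] at hpeel ⊢
    linear_combination hpeel

variable {𝕜 : Type*} [NormedField 𝕜] {p : 𝕜}

lemma gaussBinom_eq_div (hp : ‖p‖ < 1) (j d : ℕ) :
    gaussBinom p (j + d) j = qPoch p p (j + d) / (qPoch p p j * qPoch p p d) :=
  eq_div_of_mul_eq (mul_ne_zero (qPoch_ne_zero hp hp j) (qPoch_ne_zero hp hp d))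
    (gaussBinom_mul_qPoch p j d)

variable [CompleteSpace 𝕜]

lemma exists_norm_gaussBinom_le (hp : ‖p‖ < 1) :
    ∃ C : ℝ, ∀ M j, ‖gaussBinom p M j‖ ≤ C := by
  have hlim := tendsto_qPoch p hp
  obtain ⟨A, hA⟩ := hlim.norm.bddAbove_range
  obtain ⟨B, hB⟩ := (hlim.inv₀ (qPochInf_ne_zero hp hp)).norm.bddAbove_range
  replace hA : ∀ n, ‖qPoch p p n‖ ≤ A := fun n => hA ⟨n, rfl⟩
  replace hB : ∀ n, ‖(qPoch p p n)⁻¹‖ ≤ B := fun n => hB ⟨n, rfl⟩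
  have hA0 : 0 ≤ A := (norm_nonneg _).trans (hA 0)
  have hB0 : 0 ≤ B := (norm_nonneg _).trans (hB 0)
  refine ⟨A * (B * B), fun M j => ?_⟩
  rcases le_or_gt j M with h | h
  · obtain ⟨d, rfl⟩ := Nat.exists_eq_add_of_le h
    rw [gaussBinom_eq_div hp, div_eq_mul_inv, mul_inv, norm_mul, norm_mul]
    gcongr
    exacts [hA _, hB _, hB _]
  · rw [gaussBinom_eq_zero_of_lt p h, norm_zero]
    positivity

end GaussianBinomial

section ThetaSeries

/-- The triangular number `n (n - 1) / 2` for an integer `n`, the exponent in the theta series. -/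
def tri (n : ℤ) : ℤ :=
  n * (n - 1) / 2

lemma two_mul_tri (n : ℤ) : 2 * tri n = n * (n - 1) :=
  Int.mul_ediv_cancel' (Int.even_mul_pred_self n).two_dvd

lemma tri_add (m n : ℤ) : tri (m + n) = tri m + tri n + m * n := by
  linarith [two_mul_tri m, two_mul_tri n, two_mul_tri (m + n)]

lemma tri_neg (n : ℤ) : tri (-n) = tri n + n := by
  linarith [two_mul_tri n, two_mul_tri (-n)]

lemma tri_natCast (n : ℕ) : tri n = n.choose 2 := by
  induction n with
  | zero => rfl
  | succ n ih =>
    rw [Nat.choose_succ_succ', Nat.choose_one_right]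
    push_cast
    rw [tri_add, ih, show tri 1 = 0 from rfl]
    ring

/-- The theta series `∑_{n ∈ ℤ} p^{n(n-1)/2} xⁿ`, meant for `0 < ‖p‖ < 1` and `x ≠ 0`. -/
noncomputable def thetaSeries {𝕜 : Type*} [NormedField 𝕜] (x p : 𝕜) : 𝕜 :=
  ∑' n : ℤ, p ^ tri n * x ^ n

lemma summable_pow_choose_two_mul_pow {r s : ℝ} (hr0 : r ≠ 0) (hr : |r| < 1) (hs : s ≠ 0) :
    Summable fun n : ℕ => r ^ n.choose 2 * s ^ n := by
  refine summable_of_ratio_test_tendsto_lt_one one_pos (.of_forall fun n => by positivity) ?_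
  have hlim : Tendsto (fun n : ℕ => |r| ^ n * |s|) atTop (𝓝 0) := by
    simpa only [zero_mul] using
      (tendsto_pow_atTop_nhds_zero_of_lt_one (abs_nonneg r) hr).mul_const |s|
  refine hlim.congr fun n => ?_
  rw [Nat.choose_succ_succ', Nat.choose_one_right, pow_add, pow_succ s, ← norm_div]
  rw [show r ^ n * r ^ n.choose 2 * (s ^ n * s) / (r ^ n.choose 2 * s ^ n) = r ^ n * s by
    field_simp]
  simp only [Real.norm_eq_abs, abs_mul, abs_pow]

variable {𝕜 : Type*} [NormedField 𝕜] {p x : 𝕜}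

lemma summable_norm_thetaSeries (hp0 : p ≠ 0) (hp : ‖p‖ < 1) (hx : x ≠ 0) :
    Summable fun n : ℤ => ‖p ^ tri n * x ^ n‖ := by
  have hr : |‖p‖| < 1 := by rwa [abs_norm]
  refine .of_nat_of_neg ?_ ?_
  · refine (summable_pow_choose_two_mul_pow (norm_ne_zero_iff.2 hp0) hr
      (norm_ne_zero_iff.2 hx)).congr fun n => ?_
    rw [norm_mul, norm_zpow, norm_zpow, tri_natCast, zpow_natCast, zpow_natCast]
  · refine (summable_pow_choose_two_mul_pow (norm_ne_zero_iff.2 hp0) hr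
      (norm_ne_zero_iff.2 (div_ne_zero hp0 hx))).congr fun n => ?_
    rw [tri_neg, tri_natCast, zpow_add₀ hp0, zpow_natCast, zpow_natCast, zpow_neg, zpow_natCast,
      mul_assoc, ← div_eq_mul_inv, ← div_pow, norm_mul, norm_pow, norm_pow]

lemma thetaSeries_div (hp0 : p ≠ 0) (x : 𝕜) : thetaSeries (p / x) p = thetaSeries x p := by
  rw [thetaSeries, thetaSeries, ← (Equiv.neg ℤ).tsum_eq]
  refine tsum_congr fun n => ?_
  rw [Equiv.neg_apply, tri_neg, div_zpow, zpow_add₀ hp0, zpow_neg, zpow_neg]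
  have := zpow_ne_zero n hp0
  field_simp

end ThetaSeries

section TripleProduct

variable {𝕜 : Type*} [NormedField 𝕜] {p x : 𝕜}

lemma qPoch_div_pow {K : Type*} [Field K] {a p : K} (ha : a ≠ 0) (hp : p ≠ 0) (n : ℕ) :
    qPoch (a / p ^ n) p n = (-a) ^ n / p ^ (n + 1).choose 2 * qPoch (p / a) p n := by
  induction n with
  | zero => simp [qPoch]
  | succ n ih =>
    rw [qPoch_succ', qPoch_succ, pow_succ p, ← div_div, div_mul_cancel₀ _ hp, ih,
      Nat.choose_succ_succ' (n + 1), Nat.choose_one_right]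
    field_simp
    ring

/-- The Gaussian binomial coefficient `[2N choose N + n]_p` for `n ∈ ℤ`, which vanishes unless
`|n| ≤ N`. -/
def centralGaussBinom {R : Type*} [CommSemiring R] (p : R) (N : ℕ) (n : ℤ) : R :=
  if -N ≤ n then gaussBinom p (2 * N) (n + N).toNat else 0

lemma qPoch_neg_mul_qPoch_eq_tsum (hp : p ≠ 0) (hx : x ≠ 0) (N : ℕ) :
    qPoch (-x) p N * qPoch (p / -x) p N =
      ∑' n : ℤ, centralGaussBinom p N n * (p ^ tri n * x ^ n) := by
  have hinj : Function.Injective fun j : ℕ => (j : ℤ) - N := fun i j h => by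
    simpa only [sub_left_inj, Nat.cast_inj] using h
  have hsupp : (Function.support fun n : ℤ => centralGaussBinom p N n * (p ^ tri n * x ^ n)) ⊆
      Set.range fun j : ℕ => (j : ℤ) - N := fun n hn => by
    refine ⟨(n + N).toNat, ?_⟩
    have : -(N : ℤ) ≤ n := by
      by_contra h
      exact hn (by simp only [centralGaussBinom, if_neg h, zero_mul])
    dsimp only
    omega
  have hsplit : qPoch (-x / p ^ N) p (2 * N) = qPoch (-x / p ^ N) p N * qPoch (-x) p N := by
    rw [two_mul, qPoch, prod_range_add]
    simp only [pow_add, ← mul_assoc, div_mul_cancel₀ _ (pow_ne_zero N hp), qPoch]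
  rw [← hinj.tsum_eq hsupp, tsum_eq_sum (s := range (2 * N + 1)) fun j hj => ?_]
  · have hbinom := qPoch_neg_eq_sum p (x / p ^ N) (2 * N)
    rw [← neg_div, hsplit, qPoch_div_pow (neg_ne_zero.2 hx) hp, neg_neg] at hbinom
    have hscale : x ^ N / p ^ (N + 1).choose 2 ≠ 0 :=
      div_ne_zero (pow_ne_zero N hx) (pow_ne_zero _ hp)
    refine mul_left_cancel₀ hscale ?_
    rw [mul_comm (qPoch (-x) p N), ← mul_assoc, hbinom, mul_sum]
    refine sum_congr rfl fun j _ => ?_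
    rw [centralGaussBinom, if_pos (by omega), sub_add_cancel, Int.toNat_natCast]
    rw [sub_eq_add_neg, tri_add, tri_neg, tri_natCast, tri_natCast, Nat.choose_succ_succ',
      Nat.choose_one_right, zpow_add₀ hp, zpow_add₀ hp, zpow_add₀ hp, zpow_add₀ hx, zpow_neg,
      mul_neg, zpow_neg]
    norm_cast
    rw [div_pow, ← pow_mul, mul_comm N j, pow_add]
    field_simp
  · rw [centralGaussBinom, if_pos (by omega), sub_add_cancel, Int.toNat_natCast,
      gaussBinom_eq_zero_of_lt p (by simpa using hj), zero_mul]

variable [CompleteSpace 𝕜]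

lemma exists_norm_centralGaussBinom_le (hp : ‖p‖ < 1) :
    ∃ C : ℝ, ∀ N n, ‖centralGaussBinom p N n‖ ≤ C := by
  obtain ⟨C, hC⟩ := exists_norm_gaussBinom_le hp
  refine ⟨C, fun N n => ?_⟩
  unfold centralGaussBinom
  split_ifs
  · exact hC _ _
  · simpa only [norm_zero] using (norm_nonneg _).trans (hC 0 0)

lemma tendsto_toNat_add_atTop (n : ℤ) : Tendsto (fun N : ℕ => (n + N).toNat) atTop atTop :=
  tendsto_atTop.2 fun b => by
    filter_upwards [eventually_ge_atTop (b + n.natAbs)] with N hN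
    omega

lemma tendsto_centralGaussBinom (hp : ‖p‖ < 1) (n : ℤ) :
    Tendsto (fun N => centralGaussBinom p N n) atTop (𝓝 (qPochInf p p)⁻¹) := by
  have hlim := tendsto_qPoch p hp
  have hne := qPochInf_ne_zero hp hp
  have hdiv := (hlim.comp (tendsto_id.const_mul_atTop' two_pos)).div
    ((hlim.comp (tendsto_toNat_add_atTop n)).mul (hlim.comp (tendsto_toNat_add_atTop (-n))))
    (mul_ne_zero hne hne)
  rw [div_mul_cancel_left₀ hne] at hdiv
  refine hdiv.congr' ?_
  filter_upwards [eventually_ge_atTop n.natAbs] with N hN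
  have hsum : 2 * N = (n + N).toNat + (-n + N).toNat := by omega
  rw [centralGaussBinom, if_pos (by omega)]
  simp only [Pi.div_apply, Function.comp_apply, id]
  rw [hsum, gaussBinom_eq_div hp]

/-- Jacobi's triple product identity. -/
lemma thetaSeries_eq_mul_modTheta (hp0 : p ≠ 0) (hp : ‖p‖ < 1) (hx : x ≠ 0) :
    thetaSeries x p = qPochInf p p * modTheta (-x) p := by
  obtain ⟨C, hC⟩ := exists_norm_centralGaussBinom_le hp
  have hlim : Tendsto (fun N => qPoch (-x) p N * qPoch (p / -x) p N) atTop
      (𝓝 ((qPochInf p p)⁻¹ * thetaSeries x p)) := by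
    simp only [qPoch_neg_mul_qPoch_eq_tsum hp0 hx, thetaSeries, ← tsum_mul_left]
    refine tendsto_tsum_of_dominated_convergence
      ((summable_norm_thetaSeries hp0 hp hx).mul_left C)
      (fun n => (tendsto_centralGaussBinom hp n).mul_const _) (.of_forall fun N n => ?_)
    rw [norm_mul]
    exact mul_le_mul_of_nonneg_right (hC N n) (norm_nonneg _)
  have hprod := (tendsto_qPoch (-x) hp).mul (tendsto_qPoch (p / -x) hp)
  rw [modTheta, tendsto_nhds_unique hprod hlim, mul_inv_cancel_left₀ (qPochInf_ne_zero hp hp)]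

end TripleProduct

section Schroeter

lemma tri_mul (a n : ℤ) : tri (a * n) = a ^ 2 * tri n + tri a * n := by
  refine mul_left_cancel₀ (two_ne_zero' ℤ) ?_
  linear_combination two_mul_tri (a * n) - a ^ 2 * two_mul_tri n - n * two_mul_tri a

lemma bijective_norm_form_lattice {a b : ℤ} (hab : IsCoprime a b) {r : ℕ}
    (hr : (r : ℤ) = a ^ 2 + b ^ 2) :
    Function.Bijective fun s : Fin r × ℤ × ℤ =>
      (a * s.2.1 - b * s.2.2, b * s.2.1 + a * s.2.2 + (s.1 : ℕ)) := by
  obtain ⟨u, v, huv⟩ := hab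
  have hr0 : (r : ℤ) ≠ 0 := hr ▸ IsCoprime.sq_add_sq_ne_zero ⟨u, v, huv⟩
  refine ⟨?_, ?_⟩
  · rintro ⟨k, i, j⟩ ⟨k', i', j'⟩ h
    obtain ⟨h₁, h₂⟩ := Prod.mk.inj h
    dsimp only at h₁ h₂
    have hi : r * (i - i') = b * (k' - k) := by
      linear_combination (i - i') * hr + a * h₁ + b * h₂
    have hj : r * (j - j') = a * (k' - k) := by
      linear_combination (j - j') * hr - b * h₁ + a * h₂
    have hdvd : (r : ℤ) ∣ k' - k :=
      ⟨u * (j - j') + v * (i - i'), by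
        linear_combination -(k' - k : ℤ) * huv - u * hj - v * hi⟩
    have hk : (k : ℤ) = k' := by
      have := Int.eq_zero_of_abs_lt_dvd hdvd (abs_lt.2 ⟨by omega, by omega⟩)
      omega
    rw [hk, sub_self, mul_zero] at hi hj
    refine Prod.ext (Fin.ext (by exact_mod_cast hk)) (Prod.ext ?_ ?_)
    · exact sub_eq_zero.1 ((mul_eq_zero.1 hi).resolve_left hr0)
    · exact sub_eq_zero.1 ((mul_eq_zero.1 hj).resolve_left hr0)
  · rintro ⟨m, n⟩
    set t := a * v - b * u
    set w := (n + t * m) / r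
    have hdiv : (n + t * m) % r + r * w = n + t * m := Int.emod_add_mul_ediv _ _
    have hnonneg := Int.emod_nonneg (n + t * m) hr0
    have hlt := Int.emod_lt_of_pos (n + t * m) (by omega : (0 : ℤ) < r)
    refine ⟨(⟨((n + t * m) % r).toNat, by omega⟩, u * m + b * w, a * w - v * m), ?_⟩
    refine Prod.ext ?_ ?_ <;> dsimp only
    · linear_combination m * huv
    · rw [Int.toNat_of_nonneg hnonneg]
      linear_combination hdiv - w * hr

lemma tsum_int_prod_eq_sum_tsum {E : Type*} [NormedAddCommGroup E] [CompleteSpace E] {a b : ℤ}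
    (hab : IsCoprime a b) {r : ℕ} (hr : (r : ℤ) = a ^ 2 + b ^ 2) {F : ℤ × ℤ → E}
    (hF : Summable F) :
    ∑' z, F z =
      ∑ k ∈ range r, ∑' z : ℤ × ℤ, F (a * z.1 - b * z.2, b * z.1 + a * z.2 + k) := by
  let e := Equiv.ofBijective _ (bijective_norm_form_lattice hab hr)
  have hsum : Summable fun s => F (e s) := e.summable_iff.2 hF
  rw [← e.tsum_eq, hsum.tsum_prod, tsum_fintype, sum_range]
  rfl

lemma theta_term_mul_theta_term {K : Type*} [Field K] {p x y : K} (hp : p ≠ 0) (hx : x ≠ 0)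
    (hy : y ≠ 0) {a b : ℤ} {r : ℕ} (hr : (r : ℤ) = a ^ 2 + b ^ 2) (k : ℕ) (i j : ℤ) :
    p ^ tri (a * i - b * j) * x ^ (a * i - b * j) *
        (p ^ tri (b * i + a * j + k) * y ^ (b * i + a * j + k)) =
      p ^ k.choose 2 * y ^ k *
        ((p ^ r) ^ tri i * (x ^ a * y ^ b * p ^ (tri a + tri b + b * k)) ^ i *
          ((p ^ r) ^ tri j * (x ^ (-b) * y ^ a * p ^ (tri a + tri (-b) + a * k)) ^ j)) := by
  have hexp : tri (a * i - b * j) + tri (b * i + a * j + k) =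
      k.choose 2 + r * tri i + (tri a + tri b + b * k) * i +
        (r * tri j + (tri a + tri (-b) + a * k) * j) := by
    rw [sub_eq_add_neg, ← neg_mul, tri_add, tri_add, tri_add, tri_mul, tri_mul, tri_mul, tri_mul,
      tri_natCast, hr]
    ring
  calc _ = p ^ (tri (a * i - b * j) + tri (b * i + a * j + k)) *
        (x ^ (a * i) * x ^ (-b * j) * (y ^ (b * i) * y ^ (a * j) * y ^ k)) := by
        rw [zpow_add₀ hp, sub_eq_add_neg, zpow_add₀ hx, zpow_add₀ hy, zpow_add₀ hy, zpow_natCast,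
          neg_mul]
        ring
    _ = _ := by
        rw [hexp, zpow_add₀ hp, zpow_add₀ hp, zpow_add₀ hp, zpow_add₀ hp]
        simp only [mul_zpow, ← zpow_mul, ← zpow_natCast]
        ring

variable {𝕜 : Type*} [NormedField 𝕜] [CompleteSpace 𝕜] {p x y : 𝕜}

/-- Schröter's formula for two theta series of equal nome. -/
lemma thetaSeries_mul_thetaSeries (hp0 : p ≠ 0) (hp : ‖p‖ < 1) (hx : x ≠ 0) (hy : y ≠ 0)
    {a b : ℤ} (hab : IsCoprime a b) {r : ℕ} (hr : (r : ℤ) = a ^ 2 + b ^ 2) :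
    thetaSeries x p * thetaSeries y p = ∑ k ∈ range r, p ^ k.choose 2 * y ^ k *
      (thetaSeries (x ^ a * y ^ b * p ^ (tri a + tri b + b * k)) (p ^ r) *
        thetaSeries (x ^ (-b) * y ^ a * p ^ (tri a + tri (-b) + a * k)) (p ^ r)) := by
  have hxs := summable_norm_thetaSeries hp0 hp hx
  have hys := summable_norm_thetaSeries hp0 hp hy
  have hr0 : r ≠ 0 := fun h => hab.sq_add_sq_ne_zero (by rw [← hr, h, Nat.cast_zero])
  have hpr : ‖p ^ r‖ < 1 := norm_pow_lt_one hp hr0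
  have hsum {z : 𝕜} (hz : z ≠ 0) := summable_norm_thetaSeries (pow_ne_zero r hp0) hpr hz
  have hne (m n l : ℤ) : x ^ m * y ^ n * p ^ l ≠ 0 :=
    mul_ne_zero (mul_ne_zero (zpow_ne_zero _ hx) (zpow_ne_zero _ hy)) (zpow_ne_zero _ hp0)
  rw [thetaSeries, thetaSeries, tsum_mul_tsum_of_summable_norm hxs hys]
  have hxy := summable_mul_of_summable_norm hxs hys
  rw [tsum_int_prod_eq_sum_tsum hab hr hxy]
  refine sum_congr rfl fun k _ => ?_
  rw [thetaSeries, thetaSeries,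
    tsum_mul_tsum_of_summable_norm (hsum (hne _ _ _)) (hsum (hne _ _ _)), ← tsum_mul_left]
  exact tsum_congr fun z => theta_term_mul_theta_term hp0 hx hy hr k z.1 z.2

end Schroeter

section Weierstrass

variable {𝕜 : Type*} [NormedField 𝕜] [CompleteSpace 𝕜] {p x y u v : 𝕜}

lemma thetaSeries_neg_mul_mul_thetaSeries_neg_div (hp0 : p ≠ 0) (hp : ‖p‖ < 1) (hx : x ≠ 0)
    (hy : y ≠ 0) :
    thetaSeries (-(x * y)) p * thetaSeries (-(x / y)) p =
      thetaSeries (x ^ 2) (p ^ 2) * thetaSeries (p * y ^ 2) (p ^ 2) -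
        x / y * (thetaSeries (p * x ^ 2) (p ^ 2) * thetaSeries (y ^ 2) (p ^ 2)) := by
  have hp2 : p ^ 2 ≠ 0 := pow_ne_zero 2 hp0
  rw [thetaSeries_mul_thetaSeries hp0 hp (neg_ne_zero.2 (mul_ne_zero hx hy))
    (neg_ne_zero.2 (div_ne_zero hx hy)) isCoprime_one_left (a := 1) (b := 1) (r := 2)
    (by norm_num), sum_range_succ, sum_range_one, ← thetaSeries_div hp2 (p * y ^ 2),
    ← thetaSeries_div hp2 (y ^ 2)]
  have h₁ : x * y * (x / y) = x ^ 2 := by field_simp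
  have h₂ : y⁻¹ * x⁻¹ * (x / y) = (y ^ 2)⁻¹ := by field_simp
  have h₃ : p ^ 2 / (p * y ^ 2) = (y ^ 2)⁻¹ * p := by field_simp
  simp only [show tri 1 = 0 from rfl, show tri (-1) = 1 from rfl]
  simp only [Nat.choose_zero_succ, Nat.choose_succ_self, Nat.cast_zero, Nat.cast_one, pow_zero,
    pow_one, zpow_ofNat, zpow_neg, inv_neg, mul_inv_rev, mul_neg, neg_mul, neg_neg, mul_zero,
    mul_one, one_mul, add_zero, zero_add, Int.reduceAdd, Int.reduceNeg]
  simp only [h₁, h₂, h₃]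
  rw [mul_comm p (x ^ 2), div_eq_inv_mul (p ^ 2)]
  ring

/-- Weierstrass' three-term relation. -/
lemma modTheta_three_term (hp0 : p ≠ 0) (hp : ‖p‖ < 1) (hx : x ≠ 0) (hy : y ≠ 0) (hu : u ≠ 0)
    (hv : v ≠ 0) :
    modTheta (x * y) p * modTheta (x / y) p * (modTheta (u * v) p * modTheta (u / v) p) -
        modTheta (x * v) p * modTheta (x / v) p * (modTheta (u * y) p * modTheta (u / y) p) =
      u / y * (modTheta (y * v) p * modTheta (y / v) p *
        (modTheta (x * u) p * modTheta (x / u) p)) := by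
  have hJ := qPochInf_ne_zero hp hp
  have haddition {s t : 𝕜} (hs : s ≠ 0) (ht : t ≠ 0) :
      qPochInf p p ^ 2 * (modTheta (s * t) p * modTheta (s / t) p) =
        thetaSeries (s ^ 2) (p ^ 2) * thetaSeries (p * t ^ 2) (p ^ 2) -
          s / t * (thetaSeries (p * s ^ 2) (p ^ 2) * thetaSeries (t ^ 2) (p ^ 2)) := by
    rw [← thetaSeries_neg_mul_mul_thetaSeries_neg_div hp0 hp hs ht,
      thetaSeries_eq_mul_modTheta hp0 hp (neg_ne_zero.2 (mul_ne_zero hs ht)),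
      thetaSeries_eq_mul_modTheta hp0 hp (neg_ne_zero.2 (div_ne_zero hs ht)), neg_neg, neg_neg]
    ring
  refine mul_left_cancel₀ (pow_ne_zero 4 hJ) ?_
  calc _ = qPochInf p p ^ 2 * (modTheta (x * y) p * modTheta (x / y) p) *
          (qPochInf p p ^ 2 * (modTheta (u * v) p * modTheta (u / v) p)) -
        qPochInf p p ^ 2 * (modTheta (x * v) p * modTheta (x / v) p) *
          (qPochInf p p ^ 2 * (modTheta (u * y) p * modTheta (u / y) p)) := by ring
    _ = u / y * (qPochInf p p ^ 2 * (modTheta (y * v) p * modTheta (y / v) p) *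
          (qPochInf p p ^ 2 * (modTheta (x * u) p * modTheta (x / u) p))) := by
        rw [haddition hx hy, haddition hu hv, haddition hx hv, haddition hu hy, haddition hy hv,
          haddition hx hu]
        field_simp
        ring
    _ = _ := by ring

lemma modTheta_sq (hp0 : p ≠ 0) (hp : ‖p‖ < 1) (x : 𝕜) :
    modTheta (x ^ 2) (p ^ 2) = modTheta x (p ^ 2) * modTheta (-x) (p ^ 2) *
      (modTheta (x * p) (p ^ 2) * modTheta (-(x * p)) (p ^ 2)) := by
  have hp2 : ‖p ^ 2‖ < 1 := norm_pow_lt_one hp two_ne_zero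
  rw [modTheta_mul_modTheta_neg _ hp2, modTheta_mul_modTheta_neg _ hp2, mul_pow,
    modTheta_eq_prod _ hp2 (pow_ne_zero 2 hp0) two_ne_zero, prod_range_succ, prod_range_one,
    pow_zero, mul_one, pow_one]

end Weierstrass

section LevelTen

/-- The theta value `[Qⁱ; Q¹⁰]`. -/
noncomputable def tenTheta {𝕜 : Type*} [NormedField 𝕜] (Q : 𝕜) (i : ℕ) : 𝕜 :=
  modTheta (Q ^ i) (Q ^ 10)

/-- The theta value `[-Qⁱ; Q¹⁰]`. -/
noncomputable def tenThetaNeg {𝕜 : Type*} [NormedField 𝕜] (Q : 𝕜) (i : ℕ) : 𝕜 :=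
  modTheta (-Q ^ i) (Q ^ 10)

variable {𝕜 : Type*} [NormedField 𝕜] {Q : 𝕜}

lemma tenTheta_symm (hQ0 : Q ≠ 0) {i j : ℕ} (hij : i + j = 10) :
    tenTheta Q i = tenTheta Q j := by
  rw [tenTheta, ← modTheta_div (pow_ne_zero 10 hQ0), ← hij, pow_add,
    mul_div_cancel_left₀ _ (pow_ne_zero i hQ0), ← pow_add, hij, tenTheta]

lemma tenThetaNeg_symm (hQ0 : Q ≠ 0) {i j : ℕ} (hij : i + j = 10) :
    tenThetaNeg Q i = tenThetaNeg Q j := by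
  rw [tenThetaNeg, ← modTheta_div (pow_ne_zero 10 hQ0), ← hij, pow_add, div_neg,
    mul_div_cancel_left₀ _ (pow_ne_zero i hQ0), ← pow_add, hij, tenThetaNeg]

variable [CompleteSpace 𝕜]

lemma tenTheta_ne_zero (hQ : ‖Q‖ < 1) {i j : ℕ} (hi : i ≠ 0) (hj : j ≠ 0) (hij : i + j = 10) :
    tenTheta Q i ≠ 0 := by
  simpa only [tenTheta, hij] using modTheta_pow_pow_ne_zero hQ hi hj

lemma tenTheta_quartic_one_three_five (hQ0 : Q ≠ 0) (hQ : ‖Q‖ < 1) :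
    tenThetaNeg Q 1 * tenThetaNeg Q 3 ^ 2 * tenThetaNeg Q 5 -
        Q * (tenThetaNeg Q 0 * tenThetaNeg Q 2 ^ 2 * tenThetaNeg Q 4) =
      tenTheta Q 1 * tenTheta Q 3 ^ 2 * tenTheta Q 5 := by
  have hp : ‖Q ^ 10‖ < 1 := norm_pow_lt_one hQ (by norm_num)
  have hdiv : Q ^ 3 / Q ^ 2 = Q := by field_simp
  have h := modTheta_three_term (x := Q ^ 3) (y := Q ^ 2) (u := -Q ^ 3) (v := -1)
    (pow_ne_zero 10 hQ0) hp (pow_ne_zero 3 hQ0) (pow_ne_zero 2 hQ0)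
    (neg_ne_zero.2 (pow_ne_zero 3 hQ0)) (neg_ne_zero.2 one_ne_zero)
  simp only [mul_neg, neg_mul, div_neg, neg_div, neg_neg, mul_one, div_one, hdiv, ← pow_add,
    div_self (pow_ne_zero 3 hQ0), Nat.reduceAdd] at h
  rw [← tenThetaNeg_symm hQ0 (show 6 + 4 = 10 from rfl)]
  simp only [tenTheta, tenThetaNeg, pow_zero, pow_one]
  linear_combination -h

lemma tenTheta_quartic_one_three_five' (hQ0 : Q ≠ 0) (hQ : ‖Q‖ < 1) :
    tenThetaNeg Q 1 ^ 2 * tenThetaNeg Q 3 * tenThetaNeg Q 5 -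
        tenThetaNeg Q 0 * tenThetaNeg Q 2 * tenThetaNeg Q 4 ^ 2 =
      -(tenTheta Q 1 ^ 2 * tenTheta Q 3 * tenTheta Q 5) := by
  have hp : ‖Q ^ 10‖ < 1 := norm_pow_lt_one hQ (by norm_num)
  have hdiv : Q ^ 4 / Q = Q ^ 3 := by field_simp
  have h := modTheta_three_term (x := Q ^ 4) (y := -Q) (u := Q) (v := -1)
    (pow_ne_zero 10 hQ0) hp (pow_ne_zero 4 hQ0) (neg_ne_zero.2 hQ0) hQ0 (neg_ne_zero.2 one_ne_zero)
  simp only [mul_neg, neg_mul, div_neg, neg_neg, mul_one, div_one, hdiv, ← pow_succ, ← sq,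
    div_self hQ0, Nat.reduceAdd] at h
  simp only [tenTheta, tenThetaNeg, pow_zero, pow_one]
  linear_combination h

lemma tenTheta_quartic_two_four (hQ0 : Q ≠ 0) (hQ : ‖Q‖ < 1) :
    tenThetaNeg Q 2 ^ 2 * tenThetaNeg Q 4 ^ 2 -
        Q * (tenThetaNeg Q 1 ^ 2 * tenThetaNeg Q 3 ^ 2) =
      tenTheta Q 1 * tenTheta Q 3 * tenTheta Q 5 ^ 2 := by
  have hp : ‖Q ^ 10‖ < 1 := norm_pow_lt_one hQ (by norm_num)
  have hdiv₁ : Q ^ 5 / Q = Q ^ 4 := by field_simp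
  have hdiv₂ : Q ^ 5 / Q ^ 2 = Q ^ 3 := by field_simp
  have hdiv₃ : Q ^ 2 / Q = Q := by field_simp
  have h := modTheta_three_term (x := -Q ^ 5) (y := Q) (u := Q ^ 2) (v := -1)
    (pow_ne_zero 10 hQ0) hp (neg_ne_zero.2 (pow_ne_zero 5 hQ0)) hQ0 (pow_ne_zero 2 hQ0)
    (neg_ne_zero.2 one_ne_zero)
  simp only [mul_neg, neg_mul, div_neg, neg_div, neg_neg, mul_one, div_one, hdiv₁, hdiv₂, hdiv₃,
    ← pow_succ, ← pow_add, Nat.reduceAdd] at h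
  have h₄ := tenThetaNeg_symm hQ0 (show 6 + 4 = 10 from rfl)
  have h₃ := tenThetaNeg_symm hQ0 (show 7 + 3 = 10 from rfl)
  simp only [tenTheta, tenThetaNeg, pow_one] at h₃ h₄ ⊢
  rw [h₃, h₄] at h
  linear_combination h

lemma tenTheta_two_mul (hQ0 : Q ≠ 0) (hQ : ‖Q‖ < 1) (i : ℕ) :
    tenTheta Q (2 * i) =
      tenTheta Q i * tenThetaNeg Q i * (tenTheta Q (i + 5) * tenThetaNeg Q (i + 5)) := by
  have hp : ‖Q ^ 5‖ < 1 := norm_pow_lt_one hQ (by norm_num)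
  have h := modTheta_sq (pow_ne_zero 5 hQ0) hp (Q ^ i)
  rwa [← pow_mul, ← pow_mul, ← pow_add, mul_comm i 2] at h

lemma tenTheta_five_mul_tenThetaNeg (hQ0 : Q ≠ 0) (hQ : ‖Q‖ < 1) :
    tenTheta Q 5 * tenThetaNeg Q 5 * tenThetaNeg Q 0 = 2 := by
  have hp : ‖Q ^ 5‖ < 1 := norm_pow_lt_one hQ (by norm_num)
  have h := modTheta_mul_modTheta_neg_mul_modTheta_neg_one (pow_ne_zero 5 hQ0) hp
  rw [← pow_mul] at h
  simpa only [tenTheta, tenThetaNeg, pow_zero] using h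

end LevelTen

section LevelTenProducts

variable {𝕜 : Type*} [NormedField 𝕜] [CompleteSpace 𝕜] {Q : 𝕜}

lemma thetaSeries_pow_ten (hQ0 : Q ≠ 0) (hQ : ‖Q‖ < 1) (i : ℕ) :
    thetaSeries (Q ^ i) (Q ^ 10) = qPochInf (Q ^ 10) (Q ^ 10) * tenThetaNeg Q i :=
  thetaSeries_eq_mul_modTheta (pow_ne_zero 10 hQ0) (norm_pow_lt_one hQ (by norm_num))
    (pow_ne_zero i hQ0)

lemma thetaSeries_neg_pow_ten (hQ0 : Q ≠ 0) (hQ : ‖Q‖ < 1) (i : ℕ) :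
    thetaSeries (-Q ^ i) (Q ^ 10) = qPochInf (Q ^ 10) (Q ^ 10) * tenTheta Q i := by
  rw [thetaSeries_eq_mul_modTheta (pow_ne_zero 10 hQ0) (norm_pow_lt_one hQ (by norm_num))
    (neg_ne_zero.2 (pow_ne_zero i hQ0)), neg_neg, tenTheta]

lemma qPochInf_sq_self_eq_mul_tenTheta (hQ0 : Q ≠ 0) (hQ : ‖Q‖ < 1) :
    qPochInf (Q ^ 2) (Q ^ 2) =
      tenTheta Q 2 * tenTheta Q 4 * qPochInf (Q ^ 10) (Q ^ 10) := by
  have h₂ : Q ^ 10 / Q ^ 2 = Q ^ 8 := by field_simp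
  have h₄ : Q ^ 10 / Q ^ 4 = Q ^ 6 := by field_simp
  rw [qPochInf_eq_prod _ (norm_pow_lt_one hQ two_ne_zero) (show 5 ≠ 0 by norm_num), tenTheta,
    tenTheta, modTheta, modTheta, h₂, h₄]
  simp only [prod_range_succ, prod_range_zero, ← pow_mul, ← pow_add, Nat.reduceMul, Nat.reduceAdd]
  ring

lemma qPochInf_self_sq_eq_mul_tenTheta (hQ0 : Q ≠ 0) (hQ : ‖Q‖ < 1) :
    qPochInf Q Q ^ 2 = (tenTheta Q 1 * tenTheta Q 2 * tenTheta Q 3 * tenTheta Q 4) ^ 2 *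
      tenTheta Q 5 * qPochInf (Q ^ 10) (Q ^ 10) ^ 2 := by
  have h₁ : Q ^ 10 / Q ^ 1 = Q ^ 9 := by field_simp
  have h₃ : Q ^ 10 / Q ^ 3 = Q ^ 7 := by field_simp
  have h₅ : Q ^ 10 / Q ^ 5 = Q ^ 5 := by field_simp
  have heven := qPochInf_sq_self_eq_mul_tenTheta hQ0 hQ
  have hodd : qPochInf Q (Q ^ 2) ^ 2 = (tenTheta Q 1 * tenTheta Q 3) ^ 2 * tenTheta Q 5 := by
    rw [qPochInf_eq_prod _ (norm_pow_lt_one hQ two_ne_zero) (show 5 ≠ 0 by norm_num)]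
    simp only [tenTheta, modTheta, h₁, h₃, h₅, prod_range_succ, prod_range_zero, ← pow_mul,
      ← pow_succ', Nat.reduceMul, Nat.reduceAdd]
    ring
  rw [qPochInf_eq_prod _ hQ two_ne_zero]
  simp only [prod_range_succ, prod_range_zero, pow_zero, mul_one, one_mul, pow_one, ← sq, heven]
  rw [mul_pow, hodd]
  ring

lemma thetaSeries_self_sq (hQ0 : Q ≠ 0) (hQ : ‖Q‖ < 1) :
    thetaSeries Q (Q ^ 2) = tenTheta Q 2 * tenTheta Q 4 * qPochInf (Q ^ 10) (Q ^ 10) *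
      (tenThetaNeg Q 1 ^ 2 * tenThetaNeg Q 3 ^ 2 * tenThetaNeg Q 5) := by
  have hQ2 : ‖Q ^ 2‖ < 1 := norm_pow_lt_one hQ two_ne_zero
  have h₁ := tenThetaNeg_symm hQ0 (show 9 + 1 = 10 from rfl)
  have h₃ := tenThetaNeg_symm hQ0 (show 7 + 3 = 10 from rfl)
  rw [thetaSeries_eq_mul_modTheta (pow_ne_zero 2 hQ0) hQ2 hQ0,
    qPochInf_sq_self_eq_mul_tenTheta hQ0 hQ,
    modTheta_eq_prod _ hQ2 (pow_ne_zero 2 hQ0) (show 5 ≠ 0 by norm_num)]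
  simp only [tenThetaNeg] at h₁ h₃ ⊢
  simp only [prod_range_succ, prod_range_zero, neg_mul, ← pow_mul, ← pow_succ', Nat.reduceMul,
    Nat.reduceAdd, h₁, h₃]
  ring

lemma thetaSeries_one_sq (hQ0 : Q ≠ 0) (hQ : ‖Q‖ < 1) :
    thetaSeries 1 (Q ^ 2) = tenTheta Q 2 * tenTheta Q 4 * qPochInf (Q ^ 10) (Q ^ 10) *
      (tenThetaNeg Q 0 * tenThetaNeg Q 2 ^ 2 * tenThetaNeg Q 4 ^ 2) := by
  have hQ2 : ‖Q ^ 2‖ < 1 := norm_pow_lt_one hQ two_ne_zero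
  have h₂ := tenThetaNeg_symm hQ0 (show 8 + 2 = 10 from rfl)
  have h₄ := tenThetaNeg_symm hQ0 (show 6 + 4 = 10 from rfl)
  rw [thetaSeries_eq_mul_modTheta (pow_ne_zero 2 hQ0) hQ2 one_ne_zero,
    qPochInf_sq_self_eq_mul_tenTheta hQ0 hQ,
    modTheta_eq_prod _ hQ2 (pow_ne_zero 2 hQ0) (show 5 ≠ 0 by norm_num)]
  simp only [tenThetaNeg] at h₂ h₄ ⊢
  simp only [prod_range_succ, prod_range_zero, neg_mul, one_mul, ← pow_mul, Nat.reduceMul, h₂, h₄]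
  ring

lemma tenTheta_two_eq (hQ0 : Q ≠ 0) (hQ : ‖Q‖ < 1) :
    tenTheta Q 2 = tenTheta Q 1 * tenTheta Q 4 * (tenThetaNeg Q 1 * tenThetaNeg Q 4) := by
  have h := tenTheta_two_mul hQ0 hQ 1
  rw [tenTheta_symm hQ0 (show 1 + 5 + 4 = 10 from rfl),
    tenThetaNeg_symm hQ0 (show 1 + 5 + 4 = 10 from rfl)] at h
  linear_combination h

lemma tenTheta_four_eq (hQ0 : Q ≠ 0) (hQ : ‖Q‖ < 1) :
    tenTheta Q 4 = tenTheta Q 2 * tenTheta Q 3 * (tenThetaNeg Q 2 * tenThetaNeg Q 3) := by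
  have h := tenTheta_two_mul hQ0 hQ 2
  rw [tenTheta_symm hQ0 (show 2 + 5 + 3 = 10 from rfl),
    tenThetaNeg_symm hQ0 (show 2 + 5 + 3 = 10 from rfl)] at h
  linear_combination h

lemma thetaSeries_mul_tenThetaNeg_sub_one_four (hQ0 : Q ≠ 0) (hQ : ‖Q‖ < 1) :
    thetaSeries Q (Q ^ 2) * tenThetaNeg Q 4 - Q * (thetaSeries 1 (Q ^ 2) * tenThetaNeg Q 1) =
      qPochInf (Q ^ 10) (Q ^ 10) * (tenTheta Q 2 ^ 2 * tenTheta Q 3 ^ 2 * tenTheta Q 5) := by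
  rw [thetaSeries_self_sq hQ0 hQ, thetaSeries_one_sq hQ0 hQ]
  calc _ = tenTheta Q 2 * tenTheta Q 4 * qPochInf (Q ^ 10) (Q ^ 10) *
        (tenThetaNeg Q 1 * tenThetaNeg Q 4) *
        (tenThetaNeg Q 1 * tenThetaNeg Q 3 ^ 2 * tenThetaNeg Q 5 -
          Q * (tenThetaNeg Q 0 * tenThetaNeg Q 2 ^ 2 * tenThetaNeg Q 4)) := by ring
    _ = qPochInf (Q ^ 10) (Q ^ 10) * (tenTheta Q 2 * (tenTheta Q 1 * tenTheta Q 4 *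
        (tenThetaNeg Q 1 * tenThetaNeg Q 4)) * tenTheta Q 3 ^ 2 * tenTheta Q 5) := by
      rw [tenTheta_quartic_one_three_five hQ0 hQ]
      ring
    _ = _ := by rw [← tenTheta_two_eq hQ0 hQ, ← sq]

lemma thetaSeries_mul_tenThetaNeg_sub_two_three (hQ0 : Q ≠ 0) (hQ : ‖Q‖ < 1) :
    thetaSeries Q (Q ^ 2) * tenThetaNeg Q 2 - thetaSeries 1 (Q ^ 2) * tenThetaNeg Q 3 =
      -(qPochInf (Q ^ 10) (Q ^ 10) * (tenTheta Q 1 ^ 2 * tenTheta Q 4 ^ 2 * tenTheta Q 5)) := by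
  rw [thetaSeries_self_sq hQ0 hQ, thetaSeries_one_sq hQ0 hQ]
  calc _ = tenTheta Q 2 * tenTheta Q 4 * qPochInf (Q ^ 10) (Q ^ 10) *
        (tenThetaNeg Q 2 * tenThetaNeg Q 3) *
        (tenThetaNeg Q 1 ^ 2 * tenThetaNeg Q 3 * tenThetaNeg Q 5 -
          tenThetaNeg Q 0 * tenThetaNeg Q 2 * tenThetaNeg Q 4 ^ 2) := by ring
    _ = -(qPochInf (Q ^ 10) (Q ^ 10) * (tenTheta Q 1 ^ 2 * (tenTheta Q 4 * (tenTheta Q 2 *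
        tenTheta Q 3 * (tenThetaNeg Q 2 * tenThetaNeg Q 3))) * tenTheta Q 5)) := by
      rw [tenTheta_quartic_one_three_five' hQ0 hQ]
      ring
    _ = _ := by rw [← tenTheta_four_eq hQ0 hQ, ← sq]

lemma thetaSeries_mul_tenThetaNeg_sub_five_zero (hQ0 : Q ≠ 0) (hQ : ‖Q‖ < 1) :
    thetaSeries 1 (Q ^ 2) * tenThetaNeg Q 5 - Q * (thetaSeries Q (Q ^ 2) * tenThetaNeg Q 0) =
      2 * (qPochInf (Q ^ 10) (Q ^ 10) *
        (tenTheta Q 1 * tenTheta Q 2 * tenTheta Q 3 * tenTheta Q 4 * tenTheta Q 5)) := by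
  rw [thetaSeries_self_sq hQ0 hQ, thetaSeries_one_sq hQ0 hQ]
  calc _ = tenTheta Q 2 * tenTheta Q 4 * qPochInf (Q ^ 10) (Q ^ 10) *
        (tenThetaNeg Q 0 * tenThetaNeg Q 5) *
        (tenThetaNeg Q 2 ^ 2 * tenThetaNeg Q 4 ^ 2 -
          Q * (tenThetaNeg Q 1 ^ 2 * tenThetaNeg Q 3 ^ 2)) := by ring
    _ = tenTheta Q 5 * tenThetaNeg Q 5 * tenThetaNeg Q 0 * (qPochInf (Q ^ 10) (Q ^ 10) *
        (tenTheta Q 1 * tenTheta Q 2 * tenTheta Q 3 * tenTheta Q 4 * tenTheta Q 5)) := by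
      rw [tenTheta_quartic_two_four hQ0 hQ]
      ring
    _ = _ := by rw [tenTheta_five_mul_tenThetaNeg hQ0 hQ]

end LevelTenProducts

section Dissection

variable {𝕜 : Type*} [NormedField 𝕜] [CompleteSpace 𝕜] {Q q : 𝕜}

lemma tenTheta_ten (hQ0 : Q ≠ 0) (hQ : ‖Q‖ < 1) : tenTheta Q 10 = 0 := by
  rw [tenTheta_symm hQ0 (show 10 + 0 = 10 from rfl), tenTheta, pow_zero,
    modTheta_one (norm_pow_lt_one hQ (by norm_num))]

lemma pow_mul_tenTheta_add_ten (hQ0 : Q ≠ 0) (hQ : ‖Q‖ < 1) (i : ℕ) :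
    Q ^ i * tenTheta Q (i + 10) = -tenTheta Q i := by
  rw [tenTheta, pow_add, mul_modTheta_mul_self (pow_ne_zero 10 hQ0)
    (norm_pow_lt_one hQ (by norm_num)) (pow_ne_zero i hQ0), tenTheta]

lemma pow_mul_tenThetaNeg_add_ten (hQ0 : Q ≠ 0) (hQ : ‖Q‖ < 1) (i : ℕ) :
    Q ^ i * tenThetaNeg Q (i + 10) = tenThetaNeg Q i := by
  have h := mul_modTheta_mul_self (pow_ne_zero 10 hQ0) (norm_pow_lt_one hQ (by norm_num))
    (neg_ne_zero.2 (pow_ne_zero i hQ0))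
  rw [tenThetaNeg, tenThetaNeg, pow_add, ← neg_mul]
  linear_combination -h

lemma thetaSeries_sq_sq (hq0 : q ≠ 0) (hq : ‖q‖ < 1) :
    thetaSeries (q ^ 2) (q ^ 5) ^ 2 =
      thetaSeries (q ^ 4) (q ^ 10) * thetaSeries (q ^ 5) (q ^ 10) +
        q ^ 2 * (thetaSeries (q ^ 9) (q ^ 10) * thetaSeries 1 (q ^ 10)) := by
  rw [sq (thetaSeries _ _), thetaSeries_mul_thetaSeries (pow_ne_zero 5 hq0)
    (norm_pow_lt_one hq (by norm_num)) (pow_ne_zero 2 hq0) (pow_ne_zero 2 hq0)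
    isCoprime_one_left (a := 1) (b := 1) (r := 2) (by norm_num), sum_range_succ, sum_range_one,
    ← thetaSeries_div (pow_ne_zero 10 hq0) 1]
  simp only [show tri 1 = 0 from rfl, show tri (-1) = 1 from rfl]
  simp only [Nat.choose_zero_succ, Nat.choose_succ_self, Nat.cast_zero, Nat.cast_one, pow_zero,
    pow_one, zpow_ofNat, zpow_neg, mul_zero, mul_one, one_mul, add_zero, zero_add, div_one,
    Int.reduceAdd, Int.reduceNeg, inv_mul_cancel₀ (pow_ne_zero 2 hq0), ← pow_mul, ← pow_add,
    Nat.reduceMul, Nat.reduceAdd]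

lemma thetaSeries_mul_thetaSeries_neg_sq (hq0 : q ≠ 0) (hq : ‖q‖ < 1) {j a b : ℕ}
    (ha : 2 * j + 12 = 5 * a) (hb : j + 5 * b = 24) :
    thetaSeries (q ^ j) (q ^ 10) * thetaSeries (-q ^ 2) (q ^ 10) =
      qPochInf ((q ^ 5) ^ 10) ((q ^ 5) ^ 10) ^ 2 *
        ∑ k ∈ range 5, (-1) ^ k * q ^ (10 * k.choose 2 + 2 * k) *
          (tenTheta (q ^ 5) (a + 2 * k) * tenThetaNeg (q ^ 5) (b + 4 * k)) := by
  have hQ0 : q ^ 5 ≠ 0 := pow_ne_zero 5 hq0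
  have hQ : ‖q ^ 5‖ < 1 := norm_pow_lt_one hq (by norm_num)
  rw [thetaSeries_mul_thetaSeries (pow_ne_zero 10 hq0) (norm_pow_lt_one hq (by norm_num))
    (pow_ne_zero j hq0) (neg_ne_zero.2 (pow_ne_zero 2 hq0)) isCoprime_one_right
    (a := 2) (b := 1) (r := 5) (by norm_num), mul_sum]
  refine sum_congr rfl fun k _ => ?_
  have hfst : (q ^ j) ^ (2 : ℤ) * (-q ^ 2) ^ (1 : ℤ) * (q ^ 10) ^ (tri 2 + tri 1 + 1 * k) =
      -(q ^ 5) ^ (a + 2 * k) := by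
    rw [show tri 2 + tri 1 + 1 * k = (k + 1 : ℕ) by
        rw [show tri 2 = 1 from rfl, show tri 1 = 0 from rfl]; push_cast; ring,
      zpow_natCast, zpow_one, zpow_ofNat, ← pow_mul q 5, mul_add, ← ha]
    ring
  have hsnd : (q ^ j) ^ (-1 : ℤ) * (-q ^ 2) ^ (2 : ℤ) * (q ^ 10) ^ (tri 2 + tri (-1) + 2 * k) =
      (q ^ 5) ^ (b + 4 * k) := by
    rw [show tri 2 + tri (-1) + 2 * k = (2 * k + 2 : ℕ) by
        rw [show tri 2 = 1 from rfl, show tri (-1) = 1 from rfl]; push_cast; ring,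
      zpow_natCast, zpow_neg, zpow_one, zpow_ofNat, mul_assoc, inv_mul_eq_iff_eq_mul₀
        (pow_ne_zero j hq0), ← pow_mul q 5, ← pow_add, mul_add, ← add_assoc, hb]
    ring
  rw [hfst, hsnd, pow_right_comm q 10 5, thetaSeries_neg_pow_ten hQ0 hQ,
    thetaSeries_pow_ten hQ0 hQ, neg_pow (q ^ 2)]
  ring

lemma thetaSeries_four_mul_thetaSeries_neg_sq (hq0 : q ≠ 0) (hq : ‖q‖ < 1) :
    thetaSeries (q ^ 4) (q ^ 10) * thetaSeries (-q ^ 2) (q ^ 10) =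
      qPochInf ((q ^ 5) ^ 10) ((q ^ 5) ^ 10) ^ 2 *
        (tenTheta (q ^ 5) 4 * tenThetaNeg (q ^ 5) 4 -
          q ^ 2 * (tenTheta (q ^ 5) 4 * tenThetaNeg (q ^ 5) 2) +
          q ^ 4 * (tenTheta (q ^ 5) 2 * tenThetaNeg (q ^ 5) 2) -
          q ^ 8 * (tenTheta (q ^ 5) 2 * tenThetaNeg (q ^ 5) 0)) := by
  have hQ0 : q ^ 5 ≠ 0 := pow_ne_zero 5 hq0
  have hQ : ‖q ^ 5‖ < 1 := norm_pow_lt_one hq (by norm_num)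
  have hA₁₂ := pow_mul_tenTheta_add_ten hQ0 hQ 2
  have hB₁₂ := pow_mul_tenThetaNeg_add_ten hQ0 hQ 2
  have hB₁₀ := pow_mul_tenThetaNeg_add_ten hQ0 hQ 0
  have hB₂₀ := pow_mul_tenThetaNeg_add_ten hQ0 hQ 10
  rw [thetaSeries_mul_thetaSeries_neg_sq hq0 hq (a := 4) (b := 4) rfl rfl]
  simp only [sum_range_succ, sum_range_zero, Nat.reduceMul, Nat.reduceAdd,
    show Nat.choose 0 2 = 0 from rfl, show Nat.choose 1 2 = 0 from rfl,
    show Nat.choose 2 2 = 1 from rfl, show Nat.choose 3 2 = 3 from rfl,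
    show Nat.choose 4 2 = 6 from rfl, zero_add] at hA₁₂ hB₁₂ hB₁₀ hB₂₀ ⊢
  rw [tenTheta_ten hQ0 hQ, tenTheta_symm hQ0 (show 6 + 4 = 10 from rfl),
    tenTheta_symm hQ0 (show 8 + 2 = 10 from rfl), tenThetaNeg_symm hQ0 (show 8 + 2 = 10 from rfl)]
  congr 1
  linear_combination q ^ 4 * tenTheta (q ^ 5) 2 * hB₁₂ +
    q ^ 58 * tenThetaNeg (q ^ 5) 20 * hA₁₂ -
    q ^ 8 * tenTheta (q ^ 5) 2 * hB₂₀ - q ^ 8 * tenTheta (q ^ 5) 2 * hB₁₀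

lemma thetaSeries_nine_mul_thetaSeries_neg_sq (hq0 : q ≠ 0) (hq : ‖q‖ < 1) :
    thetaSeries (q ^ 9) (q ^ 10) * thetaSeries (-q ^ 2) (q ^ 10) =
      qPochInf ((q ^ 5) ^ 10) ((q ^ 5) ^ 10) ^ 2 *
        (tenTheta (q ^ 5) 4 * tenThetaNeg (q ^ 5) 3 -
          q ^ 2 * (tenTheta (q ^ 5) 2 * tenThetaNeg (q ^ 5) 3) +
          q * (tenTheta (q ^ 5) 2 * tenThetaNeg (q ^ 5) 5) -
          q ^ 3 * (tenTheta (q ^ 5) 4 * tenThetaNeg (q ^ 5) 1)) := by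
  have hQ0 : q ^ 5 ≠ 0 := pow_ne_zero 5 hq0
  have hQ : ‖q ^ 5‖ < 1 := norm_pow_lt_one hq (by norm_num)
  have hA₁₂ := pow_mul_tenTheta_add_ten hQ0 hQ 2
  have hA₁₄ := pow_mul_tenTheta_add_ten hQ0 hQ 4
  have hB₁₅ := pow_mul_tenThetaNeg_add_ten hQ0 hQ 5
  have hB₁₉ := pow_mul_tenThetaNeg_add_ten hQ0 hQ 9
  rw [thetaSeries_mul_thetaSeries_neg_sq hq0 hq (a := 6) (b := 3) rfl rfl]
  simp only [sum_range_succ, sum_range_zero, Nat.reduceMul, Nat.reduceAdd,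
    show Nat.choose 0 2 = 0 from rfl, show Nat.choose 1 2 = 0 from rfl,
    show Nat.choose 2 2 = 1 from rfl, show Nat.choose 3 2 = 3 from rfl,
    show Nat.choose 4 2 = 6 from rfl, zero_add] at hA₁₂ hA₁₄ hB₁₅ hB₁₉ ⊢
  rw [tenTheta_ten hQ0 hQ, tenTheta_symm hQ0 (show 6 + 4 = 10 from rfl),
    tenTheta_symm hQ0 (show 8 + 2 = 10 from rfl), tenThetaNeg_symm hQ0 (show 7 + 3 = 10 from rfl)]
  rw [tenThetaNeg_symm hQ0 (show 9 + 1 = 10 from rfl)] at hB₁₉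
  congr 1
  linear_combination -q ^ 26 * tenThetaNeg (q ^ 5) 15 * hA₁₂ + q * tenTheta (q ^ 5) 2 * hB₁₅ +
    q ^ 48 * tenThetaNeg (q ^ 5) 19 * hA₁₄ - q ^ 3 * tenTheta (q ^ 5) 4 * hB₁₉

lemma thetaSeries_sq_mul_thetaSeries_neg_sq_eq_modTheta (hq0 : q ≠ 0) (hq : ‖q‖ < 1) :
    thetaSeries (q ^ 2) (q ^ 5) ^ 2 * thetaSeries (-q ^ 2) (q ^ 10) =
      (tenTheta (q ^ 5) 1 * tenTheta (q ^ 5) 2 * tenTheta (q ^ 5) 3 * tenTheta (q ^ 5) 4) ^ 2 *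
        tenTheta (q ^ 5) 5 * (tenTheta (q ^ 5) 2 * tenTheta (q ^ 5) 4) *
        qPochInf ((q ^ 5) ^ 10) ((q ^ 5) ^ 10) ^ 3 *
        (modTheta (q ^ 2) (q ^ 10) * modTheta (-q ^ 2) (q ^ 5) ^ 2) := by
  have hQ0 : q ^ 5 ≠ 0 := pow_ne_zero 5 hq0
  have hQ : ‖q ^ 5‖ < 1 := norm_pow_lt_one hq (by norm_num)
  rw [thetaSeries_eq_mul_modTheta hQ0 hQ (pow_ne_zero 2 hq0),
    thetaSeries_eq_mul_modTheta (pow_ne_zero 10 hq0) (norm_pow_lt_one hq (by norm_num))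
      (neg_ne_zero.2 (pow_ne_zero 2 hq0)), neg_neg, mul_pow,
    qPochInf_self_sq_eq_mul_tenTheta hQ0 hQ, show q ^ 10 = (q ^ 5) ^ 2 by ring,
    qPochInf_sq_self_eq_mul_tenTheta hQ0 hQ]
  ring

lemma thetaSeries_sq_mul_thetaSeries_neg_sq_eq_tenTheta (hq0 : q ≠ 0) (hq : ‖q‖ < 1) :
    thetaSeries (q ^ 2) (q ^ 5) ^ 2 * thetaSeries (-q ^ 2) (q ^ 10) =
      qPochInf ((q ^ 5) ^ 10) ((q ^ 5) ^ 10) ^ 3 * tenTheta (q ^ 5) 5 *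
        (tenTheta (q ^ 5) 4 * tenTheta (q ^ 5) 2 ^ 2 * tenTheta (q ^ 5) 3 ^ 2 +
          q ^ 2 * (tenTheta (q ^ 5) 1 ^ 2 * tenTheta (q ^ 5) 4 ^ 3) +
          2 * q ^ 3 * (tenTheta (q ^ 5) 1 * tenTheta (q ^ 5) 2 ^ 2 * tenTheta (q ^ 5) 3 *
            tenTheta (q ^ 5) 4) -
          q ^ 4 * (tenTheta (q ^ 5) 1 ^ 2 * tenTheta (q ^ 5) 2 * tenTheta (q ^ 5) 4 ^ 2)) := by
  have hQ0 : q ^ 5 ≠ 0 := pow_ne_zero 5 hq0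
  have hQ : ‖q ^ 5‖ < 1 := norm_pow_lt_one hq (by norm_num)
  have h₁₄ := thetaSeries_mul_tenThetaNeg_sub_one_four hQ0 hQ
  have h₂₃ := thetaSeries_mul_tenThetaNeg_sub_two_three hQ0 hQ
  have h₅₀ := thetaSeries_mul_tenThetaNeg_sub_five_zero hQ0 hQ
  rw [← pow_mul q 5 2] at h₁₄ h₂₃ h₅₀
  have h₄ := thetaSeries_four_mul_thetaSeries_neg_sq hq0 hq
  have h₉ := thetaSeries_nine_mul_thetaSeries_neg_sq hq0 hq
  rw [thetaSeries_sq_sq hq0 hq]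
  linear_combination thetaSeries (q ^ 5) (q ^ 10) * h₄ +
    q ^ 2 * thetaSeries 1 (q ^ 10) * h₉ + qPochInf ((q ^ 5) ^ 10) ((q ^ 5) ^ 10) ^ 2 *
      (tenTheta (q ^ 5) 4 * h₁₄ + (q ^ 4 * tenTheta (q ^ 5) 2 - q ^ 2 * tenTheta (q ^ 5) 4) * h₂₃ +
        q ^ 3 * tenTheta (q ^ 5) 2 * h₅₀)

theorem modTheta_mul_modTheta_neg_sq_five_dissection (hq0 : q ≠ 0) (hq : ‖q‖ < 1) :
    modTheta (q ^ 2) (q ^ 10) * modTheta (-q ^ 2) (q ^ 5) ^ 2 =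
      (tenTheta (q ^ 5) 1 ^ 2 * tenTheta (q ^ 5) 2 * tenTheta (q ^ 5) 4 ^ 2)⁻¹ +
        q ^ 2 * (tenTheta (q ^ 5) 2 ^ 3 * tenTheta (q ^ 5) 3 ^ 2)⁻¹ +
        2 * q ^ 3 * (tenTheta (q ^ 5) 1 * tenTheta (q ^ 5) 2 * tenTheta (q ^ 5) 3 *
          tenTheta (q ^ 5) 4 ^ 2)⁻¹ -
        q ^ 4 * (tenTheta (q ^ 5) 2 ^ 2 * tenTheta (q ^ 5) 3 ^ 2 * tenTheta (q ^ 5) 4)⁻¹ := by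
  have hQ : ‖q ^ 5‖ < 1 := norm_pow_lt_one hq (by norm_num)
  have hE : qPochInf ((q ^ 5) ^ 10) ((q ^ 5) ^ 10) ≠ 0 :=
    qPochInf_ne_zero (norm_pow_lt_one hQ (by norm_num)) (norm_pow_lt_one hQ (by norm_num))
  have hA₁ := tenTheta_ne_zero hQ (show 1 ≠ 0 by norm_num) (show 9 ≠ 0 by norm_num) rfl
  have hA₂ := tenTheta_ne_zero hQ (show 2 ≠ 0 by norm_num) (show 8 ≠ 0 by norm_num) rfl
  have hA₃ := tenTheta_ne_zero hQ (show 3 ≠ 0 by norm_num) (show 7 ≠ 0 by norm_num) rfl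
  have hA₄ := tenTheta_ne_zero hQ (show 4 ≠ 0 by norm_num) (show 6 ≠ 0 by norm_num) rfl
  have hA₅ := tenTheta_ne_zero hQ (show 5 ≠ 0 by norm_num) (show 5 ≠ 0 by norm_num) rfl
  refine mul_left_cancel₀ ?_ ((thetaSeries_sq_mul_thetaSeries_neg_sq_eq_modTheta hq0 hq).symm.trans
    ((thetaSeries_sq_mul_thetaSeries_neg_sq_eq_tenTheta hq0 hq).trans ?_))
  · simp [hE, hA₁, hA₂, hA₃, hA₄, hA₅]
  · field_simp

end Dissection

open scoped PowerSeries

open PowerSeries (coeff coeff_mk coeff_mul)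

section GeneratingFunctions

/-- `F` is the generating function of the coefficients of `a` on the open unit disc. -/
def IsGenFun (a : ℝ⟦X⟧) (F : ℂ → ℂ) : Prop :=
  ∀ q : ℂ, ‖q‖ < 1 → HasSum (fun n : ℕ => ((coeff n a : ℝ) : ℂ) * q ^ n) (F q)

variable {a b : ℝ⟦X⟧} {F G : ℂ → ℂ}

lemma IsGenFun.congr (ha : IsGenFun a F) (hFG : ∀ q, ‖q‖ < 1 → F q = G q) : IsGenFun a G :=
  fun q hq => hFG q hq ▸ ha q hq

lemma isGenFun_zero : IsGenFun 0 0 := fun q _ => by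
  simpa only [map_zero, Complex.ofReal_zero, zero_mul] using! hasSum_zero

lemma isGenFun_one : IsGenFun 1 1 := fun q _ => by
  refine (hasSum_ite_eq (0 : ℕ) (1 : ℂ)).congr_fun fun n => ?_
  rcases eq_or_ne n 0 with rfl | hn <;> simp [PowerSeries.coeff_one, *]

lemma IsGenFun.smul (ha : IsGenFun a F) (c : ℝ) : IsGenFun (c • a) fun q => c * F q :=
  fun q hq => by
    simpa only [PowerSeries.coeff_smul, smul_eq_mul, Complex.ofReal_mul, mul_assoc] using
      (ha q hq).mul_left (c : ℂ)

lemma IsGenFun.mul (ha : IsGenFun a F) (hb : IsGenFun b G) : IsGenFun (a * b) (F * G) := by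
  intro q hq
  have hF := (ha q hq).summable.norm
  have hG := (hb q hq).summable.norm
  have hcauchy := tsum_mul_tsum_eq_tsum_sum_antidiagonal_of_summable_norm hF hG
  rw [(ha q hq).tsum_eq, (hb q hq).tsum_eq] at hcauchy
  rw [Pi.mul_apply, hcauchy]
  refine (summable_norm_sum_mul_antidiagonal_of_summable_norm hF hG).of_norm.hasSum.congr_fun
    fun n => ?_
  rw [coeff_mul]
  push_cast
  rw [sum_mul]
  refine sum_congr rfl fun ij hij => ?_
  rw [← mem_antidiagonal.1 hij, pow_add]
  ring

lemma IsGenFun.prod {ι : Type*} {a : ι → ℝ⟦X⟧} {F : ι → ℂ → ℂ} (s : Finset ι)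
    (ha : ∀ i ∈ s, IsGenFun (a i) (F i)) : IsGenFun (∏ i ∈ s, a i) (∏ i ∈ s, F i) := by
  classical
  induction s using Finset.induction_on with
  | empty => exact isGenFun_one
  | insert i s hi ih =>
    rw [prod_insert hi, prod_insert hi]
    exact (ha i (mem_insert_self i s)).mul (ih fun j hj => ha j (mem_insert_of_mem hj))

lemma IsGenFun.eq_coeff (ha : IsGenFun a F) {g : ℕ → ℂ}
    (hg : ∀ q : ℂ, ‖q‖ < 1 → HasSum (fun n : ℕ => g n * q ^ n) (F q)) (n : ℕ) :
    g n = ((coeff n a : ℝ) : ℂ) := by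
  have hseries {c : ℕ → ℂ} (hc : ∀ q : ℂ, ‖q‖ < 1 → HasSum (fun n : ℕ => c n * q ^ n) (F q)) :
      HasFPowerSeriesAt F (FormalMultilinearSeries.ofScalars ℂ c) 0 := by
    rw [hasFPowerSeriesAt_iff]
    filter_upwards [Metric.ball_mem_nhds (0 : ℂ) one_pos] with q hq
    simpa [FormalMultilinearSeries.coeff_ofScalars, mul_comm] using
      hc q (mem_ball_zero_iff.1 hq)
  have h := congrArg (fun c => FormalMultilinearSeries.coeff c n)
    ((hseries hg).eq_formalMultilinearSeries (hseries ha))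
  simpa only [FormalMultilinearSeries.coeff_ofScalars] using h

/-- The power series whose coefficient at `m k + r`, for `r < m`, is the `k`-th coefficient of
`a r`. -/
noncomputable def interleave {m : ℕ} [NeZero m] (a : Fin m → ℝ⟦X⟧) : ℝ⟦X⟧ :=
  .mk fun n => coeff (n / m) (a (Fin.ofNat m n))

lemma isGenFun_interleave {m : ℕ} [NeZero m] {a : Fin m → ℝ⟦X⟧} {F : Fin m → ℂ → ℂ}
    (ha : ∀ r, IsGenFun (a r) (F r)) :
    IsGenFun (interleave a) fun q => ∑ r : Fin m, q ^ (r : ℕ) * F r (q ^ m) := by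
  intro q hq
  have hclass (r : Fin m) : HasSum (fun n => if Fin.ofNat m n = r then
      ((coeff n (interleave a) : ℝ) : ℂ) * q ^ n else 0) (q ^ (r : ℕ) * F r (q ^ m)) := by
    have hinj : Function.Injective fun k : ℕ => m * k + r := fun k l h =>
      Nat.eq_of_mul_eq_mul_left (NeZero.pos m) (Nat.add_right_cancel h)
    refine (hinj.hasSum_iff fun n hn => if_neg ?_).1
      (((ha r _ (norm_pow_lt_one hq (NeZero.ne m))).mul_left _).congr_fun fun k => ?_)
    · rintro rfl
      exact hn ⟨n / m, Nat.div_add_mod n m⟩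
    · have hr : Fin.ofNat m (m * k + r) = r := Fin.ext (by simp [Nat.mod_eq_of_lt])
      rw [Function.comp_apply, if_pos hr, interleave, coeff_mk, hr,
        Nat.mul_add_div (NeZero.pos m), Nat.div_eq_of_lt r.2, add_zero, pow_add, pow_mul]
      ring
  simpa only [sum_ite_eq, mem_univ, if_true] using
    hasSum_sum (s := univ) fun r _ => hclass r

lemma isGenFun_geometric {d : ℕ} (hd : d ≠ 0) :
    IsGenFun (.mk fun n => if d ∣ n then 1 else 0) fun q => (1 - q ^ d)⁻¹ := by
  intro q hq
  have hinj : Function.Injective fun k : ℕ => d * k := fun k l h =>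
    Nat.eq_of_mul_eq_mul_left hd.bot_lt h
  refine (hinj.hasSum_iff fun n hn => ?_).1
    ((hasSum_geometric_of_norm_lt_one (norm_pow_lt_one hq hd)).congr_fun fun k => ?_)
  · rw [coeff_mk, if_neg fun ⟨k, hk⟩ => hn ⟨k, hk.symm⟩, Complex.ofReal_zero, zero_mul]
  · rw [Function.comp_apply, coeff_mk, if_pos ⟨k, rfl⟩, Complex.ofReal_one, one_mul, pow_mul]

lemma IsGenFun.coeff_mul_pow_le (ha : IsGenFun a F) (ha0 : ∀ n, 0 ≤ coeff n a) {r : ℝ}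
    (hr0 : 0 ≤ r) (hr1 : r < 1) (n : ℕ) : coeff n a * r ^ n ≤ ‖F r‖ := by
  have hsum := ha r (by rwa [Complex.norm_real, Real.norm_of_nonneg hr0])
  have hsum' : HasSum (fun n => coeff n a * r ^ n) (F r).re := by
    convert Complex.hasSum_re hsum with n
    rw [← Complex.ofReal_pow, ← Complex.ofReal_mul, Complex.ofReal_re]
  exact (le_hasSum hsum' n fun k _ => mul_nonneg (ha0 k) (pow_nonneg hr0 k)).trans
    (Complex.re_le_norm _)

section Limit

variable {a : ℕ → ℝ⟦X⟧} {F : ℕ → ℂ → ℂ}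

lemma exists_coeff_mul_pow_le (ha : ∀ N, IsGenFun (a N) (F N)) (ha0 : ∀ N n, 0 ≤ coeff n (a N))
    {r : ℝ} (hr0 : 0 ≤ r) (hr1 : r < 1) {c : ℂ} (hF : Tendsto (F · r) atTop (𝓝 c)) :
    ∃ C, ∀ N n, coeff n (a N) * r ^ n ≤ C := by
  obtain ⟨C, hC⟩ := hF.norm.bddAbove_range
  exact ⟨C, fun N n => ((ha N).coeff_mul_pow_le (ha0 N) hr0 hr1 n).trans (hC ⟨N, rfl⟩)⟩

lemma isGenFun_of_tendsto (ha : ∀ N, IsGenFun (a N) (F N)) (ha0 : ∀ N n, 0 ≤ coeff n (a N))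
    (hF : ∀ q : ℂ, ‖q‖ < 1 → Tendsto (F · q) atTop (𝓝 (G q)))
    (hb : ∀ n, Tendsto (fun N => coeff n (a N)) atTop (𝓝 (coeff n b))) : IsGenFun b G := by
  intro q hq
  obtain ⟨r, hqr, hr1⟩ := exists_between hq
  have hr0 : 0 < r := (norm_nonneg q).trans_lt hqr
  obtain ⟨C, hC⟩ := exists_coeff_mul_pow_le ha ha0 hr0.le hr1
    (hF r (by rwa [Complex.norm_real, Real.norm_of_nonneg hr0.le]))
  have hbound (N n : ℕ) : ‖((coeff n (a N) : ℝ) : ℂ) * q ^ n‖ ≤ C * (‖q‖ / r) ^ n := by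
    rw [norm_mul, Complex.norm_real, Real.norm_of_nonneg (ha0 N n), norm_pow, div_pow,
      mul_div_assoc', le_div_iff₀ (pow_pos hr0 n), mul_right_comm]
    exact mul_le_mul_of_nonneg_right (hC N n) (pow_nonneg (norm_nonneg q) n)
  have hsummable : Summable fun n : ℕ => C * (‖q‖ / r) ^ n :=
    (summable_geometric_of_lt_one (by positivity) ((div_lt_one hr0).2 hqr)).mul_left C
  have hterm (n : ℕ) : Tendsto (fun N => ((coeff n (a N) : ℝ) : ℂ) * q ^ n) atTop
      (𝓝 (((coeff n b : ℝ) : ℂ) * q ^ n)) :=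
    ((Complex.continuous_ofReal.tendsto _).comp (hb n)).mul_const _
  have htsum := tendsto_tsum_of_dominated_convergence hsummable hterm (.of_forall hbound)
  simp only [(ha _ q hq).tsum_eq] at htsum
  rw [tendsto_nhds_unique (hF q hq) htsum]
  exact (Summable.of_norm_bounded hsummable fun n =>
    le_of_tendsto' (hterm n).norm (hbound · n)).hasSum

lemma exists_isGenFun_of_monotone (ha : ∀ N, IsGenFun (a N) (F N))
    (ha0 : ∀ n, 0 ≤ coeff n (a 0)) (hmono : ∀ n, Monotone fun N => coeff n (a N))
    (hF : ∀ q : ℂ, ‖q‖ < 1 → Tendsto (F · q) atTop (𝓝 (G q))) :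
    ∃ b, IsGenFun b G ∧ ∀ N n, coeff n (a N) ≤ coeff n b := by
  have ha0' (N n : ℕ) : 0 ≤ coeff n (a N) := (ha0 n).trans (hmono n N.zero_le)
  obtain ⟨C, hC⟩ := exists_coeff_mul_pow_le ha ha0' (r := 1 / 2) (by norm_num) (by norm_num)
    (hF (1 / 2 : ℝ) (by norm_num))
  have hbdd (n : ℕ) : BddAbove (Set.range fun N => coeff n (a N)) := by
    refine ⟨C / (1 / 2) ^ n, ?_⟩
    rintro _ ⟨N, rfl⟩
    exact (le_div_iff₀ (by positivity)).2 (hC N n)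
  refine ⟨.mk fun n => ⨆ N, coeff n (a N), isGenFun_of_tendsto ha ha0' hF fun n => ?_,
    fun N n => ?_⟩
  · rw [coeff_mk]
    exact tendsto_atTop_ciSup (hmono n) (hbdd n)
  · rw [coeff_mk]
    exact le_ciSup (hbdd n) N

end Limit

end GeneratingFunctions

open AddSubmonoid (multiples)

section Positivity

lemma coeff_mul_nonneg {a b : ℝ⟦X⟧} (ha : ∀ n, 0 ≤ coeff n a) (hb : ∀ n, 0 ≤ coeff n b) (n : ℕ) :
    0 ≤ coeff n (a * b) := by
  rw [coeff_mul]
  exact sum_nonneg fun ij _ => mul_nonneg (ha ij.1) (hb ij.2)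

lemma coeff_mul_coeff_le_coeff_mul {a b : ℝ⟦X⟧} (ha : ∀ n, 0 ≤ coeff n a)
    (hb : ∀ n, 0 ≤ coeff n b) (i j : ℕ) : coeff i a * coeff j b ≤ coeff (i + j) (a * b) := by
  rw [coeff_mul]
  exact single_le_sum (f := fun ij : ℕ × ℕ => coeff ij.1 a * coeff ij.2 b)
    (fun ij _ => mul_nonneg (ha ij.1) (hb ij.2)) (mem_antidiagonal.2 rfl : (i, j) ∈ _)

/-- `F` is the generating function of nonnegative coefficients that are positive at all exponents
in `S`. Taking `S` to be a submonoid makes the positivity sets of factors combine to `S ⊔ T`. -/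
def HasPosCoeffs (S : AddSubmonoid ℕ) (F : ℂ → ℂ) : Prop :=
  ∃ a : ℝ⟦X⟧, (∀ n, 0 ≤ coeff n a) ∧ (∀ n ∈ S, 0 < coeff n a) ∧ IsGenFun a F

variable {S T : AddSubmonoid ℕ} {F G : ℂ → ℂ}

lemma HasPosCoeffs.congr (hF : HasPosCoeffs S F) (hFG : ∀ q, ‖q‖ < 1 → F q = G q) :
    HasPosCoeffs S G :=
  let ⟨a, ha0, haS, ha⟩ := hF
  ⟨a, ha0, haS, ha.congr hFG⟩

lemma HasPosCoeffs.mono (hF : HasPosCoeffs S F) (hTS : T ≤ S) : HasPosCoeffs T F :=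
  let ⟨a, ha0, haS, ha⟩ := hF
  ⟨a, ha0, fun n hn => haS n (hTS hn), ha⟩

lemma HasPosCoeffs.mul (hF : HasPosCoeffs S F) (hG : HasPosCoeffs T G) :
    HasPosCoeffs (S ⊔ T) (F * G) := by
  obtain ⟨a, ha0, haS, ha⟩ := hF
  obtain ⟨b, hb0, hbT, hb⟩ := hG
  refine ⟨a * b, coeff_mul_nonneg ha0 hb0, fun n hn => ?_, ha.mul hb⟩
  obtain ⟨i, hi, j, hj, rfl⟩ := AddSubmonoid.mem_sup.1 hn
  exact (mul_pos (haS i hi) (hbT j hj)).trans_le (coeff_mul_coeff_le_coeff_mul ha0 hb0 i j)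

lemma HasPosCoeffs.pow (hF : HasPosCoeffs S F) {n : ℕ} (hn : n ≠ 0) : HasPosCoeffs S (F ^ n) := by
  induction n, Nat.one_le_iff_ne_zero.2 hn using Nat.le_induction with
  | base => rwa [pow_one]
  | succ n hn ih => simpa only [pow_succ, sup_idem] using (ih (by omega)).mul hF

lemma hasPosCoeffs_inv_qPochInf {i m : ℕ} (hi : i ≠ 0) (hm : m ≠ 0) :
    HasPosCoeffs (multiples i) fun q => (qPochInf (q ^ i) (q ^ m))⁻¹ := by
  let geom (k : ℕ) : ℝ⟦X⟧ := .mk fun n => if i + m * k ∣ n then 1 else 0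
  let a (N : ℕ) : ℝ⟦X⟧ := ∏ k ∈ range N, geom k
  have hgeom0 (k n : ℕ) : 0 ≤ coeff n (geom k) := by
    rw [coeff_mk]
    positivity
  have ha0 (N n : ℕ) : 0 ≤ coeff n (a N) :=
    prod_induction geom (fun b => ∀ n, 0 ≤ coeff n b) (fun _ _ => coeff_mul_nonneg)
      (fun n => by rw [PowerSeries.coeff_one]; positivity) (fun k _ => hgeom0 k) n
  have hmono (n : ℕ) : Monotone fun N => coeff n (a N) := by
    refine monotone_nat_of_le_succ fun N => ?_
    have hle := coeff_mul_coeff_le_coeff_mul (ha0 N) (hgeom0 N) n 0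
    rwa [coeff_mk, if_pos (dvd_zero _), mul_one, ← prod_range_succ] at hle
  have ha (N : ℕ) : IsGenFun (a N) fun q => (qPoch (q ^ i) (q ^ m) N)⁻¹ :=
    (IsGenFun.prod (range N) fun k _ => isGenFun_geometric (d := i + m * k) (by omega)).congr
      fun q _ => by simp only [prod_apply, qPoch, prod_inv_distrib, pow_add, pow_mul]
  obtain ⟨b, hb, hab⟩ := exists_isGenFun_of_monotone ha (ha0 0) hmono fun q hq =>
    (tendsto_qPoch (q ^ i) (norm_pow_lt_one hq hm)).inv₀
      (qPochInf_ne_zero (norm_pow_lt_one hq hi) (norm_pow_lt_one hq hm))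
  refine ⟨b, fun n => (ha0 0 n).trans (hab 0 n), fun n hn => ?_, hb⟩
  obtain ⟨k, rfl⟩ := AddSubmonoid.mem_multiples_iff _ _ |>.1 hn
  refine lt_of_lt_of_le ?_ (hab 1 _)
  rw [show a 1 = geom 0 from prod_range_one geom, coeff_mk, if_pos (by simp)]
  exact one_pos

lemma hasPosCoeffs_inv_modTheta_pow {i j : ℕ} (hi : i ≠ 0) (hj : j ≠ 0) :
    HasPosCoeffs (multiples i) fun q => (modTheta (q ^ i) (q ^ (i + j)))⁻¹ := by
  have hij : i + j ≠ 0 := by omega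
  refine (((hasPosCoeffs_inv_qPochInf hi hij).mul (hasPosCoeffs_inv_qPochInf hj hij)).mono
    le_sup_left).congr fun q _ => ?_
  rw [modTheta_pow_pow q i hj, mul_inv, Pi.mul_apply]

lemma multiples_one : multiples 1 = ⊤ :=
  eq_top_iff.2 fun n _ => (AddSubmonoid.mem_multiples_iff _ _).2 ⟨n, by simp⟩

lemma mem_multiples_two_sup_multiples_three {n : ℕ} (hn : n ≠ 1) :
    n ∈ multiples 2 ⊔ multiples 3 := by
  simp only [AddSubmonoid.mem_sup, AddSubmonoid.mem_multiples_iff, smul_eq_mul]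
  obtain ⟨k, rfl | rfl⟩ := n.even_or_odd'
  · exact ⟨_, ⟨k, rfl⟩, _, ⟨0, rfl⟩, by ring⟩
  · exact ⟨_, ⟨k - 1, rfl⟩, _, ⟨1, rfl⟩, by omega⟩

end Positivity

section Signs

lemma hasPosCoeffs_inv_tenTheta {i j : ℕ} (hi : i ≠ 0) (hj : j ≠ 0) (hij : i + j = 10) :
    HasPosCoeffs (multiples i) fun q => (tenTheta q i)⁻¹ := by
  simpa only [tenTheta, hij] using hasPosCoeffs_inv_modTheta_pow hi hj

lemma hasPosCoeffs_inv_tenTheta_one : HasPosCoeffs ⊤ fun q => (tenTheta q 1)⁻¹ :=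
  multiples_one ▸ hasPosCoeffs_inv_tenTheta (j := 9) (by norm_num) (by norm_num) rfl

lemma hasPosCoeffs_inv_tenTheta_two : HasPosCoeffs (multiples 2) fun q => (tenTheta q 2)⁻¹ :=
  hasPosCoeffs_inv_tenTheta (j := 8) (by norm_num) (by norm_num) rfl

lemma hasPosCoeffs_inv_tenTheta_three : HasPosCoeffs (multiples 3) fun q => (tenTheta q 3)⁻¹ :=
  hasPosCoeffs_inv_tenTheta (j := 7) (by norm_num) (by norm_num) rfl

lemma hasPosCoeffs_inv_tenTheta_four : HasPosCoeffs (multiples 4) fun q => (tenTheta q 4)⁻¹ :=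
  hasPosCoeffs_inv_tenTheta (j := 6) (by norm_num) (by norm_num) rfl

/-- The theta quotient whose value at `q⁵` is the factor of `qʳ` in the `5`-dissection, up to a
sign for `r = 4` and a factor `2` for `r = 3`. -/
noncomputable def dissectionPart (r : Fin 5) (Q : ℂ) : ℂ :=
  ![(tenTheta Q 1 ^ 2 * tenTheta Q 2 * tenTheta Q 4 ^ 2)⁻¹, 0,
    (tenTheta Q 2 ^ 3 * tenTheta Q 3 ^ 2)⁻¹,
    (tenTheta Q 1 * tenTheta Q 2 * tenTheta Q 3 * tenTheta Q 4 ^ 2)⁻¹,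
    (tenTheta Q 2 ^ 2 * tenTheta Q 3 ^ 2 * tenTheta Q 4)⁻¹] r

lemma hasPosCoeffs_dissectionPart_zero : HasPosCoeffs ⊤ (dissectionPart 0) :=
  ((((hasPosCoeffs_inv_tenTheta_one.pow two_ne_zero).mul hasPosCoeffs_inv_tenTheta_two).mul
    (hasPosCoeffs_inv_tenTheta_four.pow two_ne_zero)).mono (by simp)).congr fun q _ => by
      simp [dissectionPart, mul_inv, -mul_inv_rev]

lemma hasPosCoeffs_dissectionPart_two :
    HasPosCoeffs (multiples 2 ⊔ multiples 3) (dissectionPart 2) :=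
  ((hasPosCoeffs_inv_tenTheta_two.pow three_ne_zero).mul
    (hasPosCoeffs_inv_tenTheta_three.pow two_ne_zero)).congr fun q _ => by
      simp [dissectionPart, mul_inv, -mul_inv_rev]

lemma hasPosCoeffs_dissectionPart_three : HasPosCoeffs ⊤ (dissectionPart 3) :=
  ((((hasPosCoeffs_inv_tenTheta_one.mul hasPosCoeffs_inv_tenTheta_two).mul
    hasPosCoeffs_inv_tenTheta_three).mul
    (hasPosCoeffs_inv_tenTheta_four.pow two_ne_zero)).mono (by simp)).congr fun q _ => by
      simp [dissectionPart, mul_inv, -mul_inv_rev]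

lemma hasPosCoeffs_dissectionPart_four :
    HasPosCoeffs (multiples 2 ⊔ multiples 3) (dissectionPart 4) :=
  ((((hasPosCoeffs_inv_tenTheta_two.pow two_ne_zero).mul
    (hasPosCoeffs_inv_tenTheta_three.pow two_ne_zero)).mul
    hasPosCoeffs_inv_tenTheta_four).mono le_sup_left).congr fun q _ => by
      simp [dissectionPart, mul_inv, -mul_inv_rev]

lemma tprod_mul_eq_modTheta_pow {q : ℂ} (hq : ‖q‖ < 1) (i : ℕ) {j : ℕ} (hj : j ≠ 0) :
    ∏' k : ℕ, (1 - q ^ ((i + j) * k + i)) * (1 - q ^ ((i + j) * k + j)) =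
      modTheta (q ^ i) (q ^ (i + j)) := by
  have hqm : ‖q ^ (i + j)‖ < 1 := norm_pow_lt_one hq (by omega)
  rw [modTheta_pow_pow q i hj, qPochInf, qPochInf, ← (multipliable_one_sub_mul_pow _ hqm).tprod_mul
    (multipliable_one_sub_mul_pow _ hqm)]
  exact tprod_congr fun k => by ring

lemma tprod_product_eq_modTheta {q : ℂ} (hq : ‖q‖ < 1) :
    (∏' k : ℕ, (1 - q ^ (10 * k + 2)) * (1 - q ^ (10 * k + 8))) *
        (∏' k : ℕ, (1 - q ^ (10 * k + 4)) * (1 - q ^ (10 * k + 6))) ^ 2 *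
        (∏' k : ℕ, (1 - q ^ (5 * k + 2)) * (1 - q ^ (5 * k + 3))) ^ (-2 : ℤ) =
      modTheta (q ^ 2) (q ^ 10) * modTheta (-q ^ 2) (q ^ 5) ^ 2 := by
  have hq5 : ‖q ^ 5‖ < 1 := norm_pow_lt_one hq (by norm_num)
  have hne := modTheta_pow_pow_ne_zero hq two_ne_zero three_ne_zero
  have hdouble := modTheta_mul_modTheta_neg (q ^ 2) hq5
  rw [← pow_mul, ← pow_mul] at hdouble
  rw [tprod_mul_eq_modTheta_pow hq 2 (j := 8) (by norm_num),
    tprod_mul_eq_modTheta_pow hq 4 (j := 6) (by norm_num),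
    tprod_mul_eq_modTheta_pow hq 2 (j := 3) (by norm_num), ← hdouble]
  simp only [Nat.reduceAdd, zpow_neg, zpow_ofNat] at hne ⊢
  field_simp

lemma modTheta_mul_modTheta_neg_sq_eq_sum {q : ℂ} (hq : ‖q‖ < 1) :
    modTheta (q ^ 2) (q ^ 10) * modTheta (-q ^ 2) (q ^ 5) ^ 2 =
      ∑ r : Fin 5, q ^ (r : ℕ) * ((![1, 0, 1, 2, -1] r : ℝ) * dissectionPart r (q ^ 5)) := by
  rw [Fin.sum_univ_five]
  rcases eq_or_ne q 0 with rfl | hq0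
  · simp [dissectionPart, tenTheta, modTheta, qPochInf]
  · rw [modTheta_mul_modTheta_neg_sq_five_dissection hq0 hq]
    simp [dissectionPart]
    ring

lemma exists_isGenFun_interleave :
    ∃ a : Fin 5 → ℝ⟦X⟧,
      IsGenFun (interleave a) (fun q =>
        modTheta (q ^ 2) (q ^ 10) * modTheta (-q ^ 2) (q ^ 5) ^ 2) ∧
      (∀ n, 0 < coeff n (a 0)) ∧ (∀ n ≠ 1, 0 < coeff n (a 2)) ∧ (∀ n, 0 < coeff n (a 3)) ∧
      ∀ n ≠ 1, coeff n (a 4) < 0 := by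
  obtain ⟨a₀, -, hpos₀, ha₀⟩ := hasPosCoeffs_dissectionPart_zero
  obtain ⟨a₂, -, hpos₂, ha₂⟩ := hasPosCoeffs_dissectionPart_two
  obtain ⟨a₃, -, hpos₃, ha₃⟩ := hasPosCoeffs_dissectionPart_three
  obtain ⟨a₄, -, hpos₄, ha₄⟩ := hasPosCoeffs_dissectionPart_four
  have ha : ∀ r, IsGenFun (![a₀, 0, a₂, a₃, a₄] r) (dissectionPart r) :=
    Fin.forall_fin_succ.2 ⟨ha₀, Fin.forall_fin_succ.2 ⟨isGenFun_zero, Fin.forall_fin_succ.2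
      ⟨ha₂, Fin.forall_fin_two.2 ⟨ha₃, ha₄⟩⟩⟩⟩
  refine ⟨fun r => (![1, 0, 1, 2, -1] r : ℝ) • ![a₀, 0, a₂, a₃, a₄] r,
    (isGenFun_interleave fun r => (ha r).smul _).congr fun q hq => ?_, fun n => ?_,
    fun n hn => ?_, fun n => ?_, fun n hn => ?_⟩
  · rw [modTheta_mul_modTheta_neg_sq_eq_sum hq]
  · simpa using hpos₀ n trivial
  · simpa using hpos₂ n (mem_multiples_two_sup_multiples_three hn)
  · simpa using hpos₃ n trivial
  · simpa using hpos₄ n (mem_multiples_two_sup_multiples_three hn)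

end Signs

end Tang

/-- Let `g : ℕ → ℂ` satisfy
`Σ_{n≥0} g(n)qⁿ = (q²,q⁸;q¹⁰)_∞ (q⁴,q⁶;q¹⁰)²_∞ (q²,q³;q⁵)_∞^{−2}` for `|q| < 1`. Then
`g(n)` is real for all `n`, and there exists `N₀` such that for all `n ≥ N₀`:
`g(n) > 0` whenever `n ≡ 0, 2, 3 (mod 5)`, and `g(n) < 0` whenever `n ≡ 4 (mod 5)`. -/
theorem tang_coeff_signs (g : ℕ → ℂ)
    (hg : ∀ q : ℂ, ‖q‖ < 1 → HasSum (fun n : ℕ => g n * q ^ n)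
      ((∏' k : ℕ, (1 - q ^ (10 * k + 2)) * (1 - q ^ (10 * k + 8))) *
        (∏' k : ℕ, (1 - q ^ (10 * k + 4)) * (1 - q ^ (10 * k + 6))) ^ 2 *
        (∏' k : ℕ, (1 - q ^ (5 * k + 2)) * (1 - q ^ (5 * k + 3))) ^ (-2 : ℤ))) :
    (∀ n : ℕ, (g n).im = 0) ∧
    ∃ N₀ : ℕ, ∀ n ≥ N₀,
      ((n % 5 = 0 ∨ n % 5 = 2 ∨ n % 5 = 3) → 0 < (g n).re) ∧
      (n % 5 = 4 → (g n).re < 0) := by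
  obtain ⟨a, ha, hpos₀, hpos₂, hpos₃, hneg₄⟩ := Tang.exists_isGenFun_interleave
  have hcoeff (n : ℕ) : g n = ((PowerSeries.coeff (n / 5) (a (Fin.ofNat 5 n)) : ℝ) : ℂ) := by
    rw [(ha.congr fun q hq => (Tang.tprod_product_eq_modTheta hq).symm).eq_coeff hg n,
      Tang.interleave, PowerSeries.coeff_mk]
  refine ⟨fun n => by rw [hcoeff, Complex.ofReal_im], 10, fun n hn => ?_⟩
  have hdiv : n / 5 ≠ 1 := by omega
  have hclass {r : Fin 5} (hr : n % 5 = r) : (g n).re = PowerSeries.coeff (n / 5) (a r) := by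
    rw [hcoeff, Complex.ofReal_re, show Fin.ofNat 5 n = r from Fin.ext hr]
  refine ⟨?_, fun h => hclass (r := 4) h ▸ hneg₄ _ hdiv⟩
  rintro (h | h | h)
  · exact hclass (r := 0) h ▸ hpos₀ _
  · exact hclass (r := 2) h ▸ hpos₂ _ hdiv
  · exact hclass (r := 3) h ▸ hpos₃ _
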